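/- Let T > 0, let h : [0,∞) → ℝ be continuous and bounded, let g satisfy (g1), be regularly oscillating at zero, and satisfy lim_{s→0⁺} g(s)/s = 0 and lim_{s→+∞} g(s)/s = +∞. Let a : [0,T] → ℝ be continuous satisfying (a1) and (a2). Then there exists a C² function u : [0,T] → ℝ with u(x) > 0 for all x ∈ [0,T], u''(x) + h(u(x)) u'(x) + a(x) g(u(x)) = 0 for all x ∈ [0,T], u(0) = u(T), and u'(0) = u'(T); that is, the periodic problem for the Liénard type equation u'' + h(u) u' + a(x) g(u) = 0 has at least one positive solution. -/

import Mathlib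

open MeasureTheory Set Filter

/-- Condition (g1): `g : [0,∞) → [0,∞)` is continuous, `g 0 = 0`, `g > 0` on `(0,∞)`. -/
def CondG1 (g : ℝ → ℝ) : Prop :=
  ContinuousOn g (Ici (0:ℝ)) ∧ (∀ s : ℝ, 0 ≤ s → 0 ≤ g s) ∧ g 0 = 0 ∧
    ∀ s : ℝ, 0 < s → 0 < g s

/-- `g` is regularly oscillating at zero. -/
def RegOscAtZero (g : ℝ → ℝ) : Prop :=
  ∀ ε : ℝ, 0 < ε → ∃ δ > (0:ℝ), ∃ η > (0:ℝ), ∀ s ω : ℝ,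
    0 < s → s < δ → |ω - 1| < η → |g (ω * s) / g s - 1| < ε

/-- `liminf_{s → +∞} g(s)/s`, computed in `EReal`. -/
noncomputable def GrowthLiminf (g : ℝ → ℝ) : EReal :=
  liminf (fun s : ℝ => ((g s / s : ℝ) : EReal)) atTop

/-- `limsup_{s → +∞} g(s)/s`, computed in `EReal`. -/
noncomputable def GrowthLimsup (g : ℝ → ℝ) : EReal :=
  limsup (fun s : ℝ => ((g s / s : ℝ) : EReal)) atTop

/-- Condition (a1): there are `m ≥ 1` pairwise disjoint closed intervals in `[0,T]`
on which `a ≥ 0` a.e. and `a` is not a.e. zero, while `a ≤ 0` a.e. outside them. -/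
def CondA1 (T : ℝ) (a : ℝ → ℝ) : Prop :=
  ∃ (m : ℕ) (σ τ : Fin m → ℝ), 0 < m ∧
    (∀ i, 0 ≤ σ i ∧ σ i ≤ τ i ∧ τ i ≤ T) ∧
    (Pairwise fun i j => Disjoint (Icc (σ i) (τ i)) (Icc (σ j) (τ j))) ∧
    (∀ i, ∀ᵐ x ∂(volume.restrict (Icc (σ i) (τ i))), 0 ≤ a x) ∧
    (∀ i, ¬ (∀ᵐ x ∂(volume.restrict (Icc (σ i) (τ i))), a x = 0)) ∧
    (∀ᵐ x ∂(volume.restrict (Icc (0:ℝ) T \ ⋃ i, Icc (σ i) (τ i))), a x ≤ 0)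


noncomputable def cc (z : Circle) : ℂ := z

lemma cc_norm (z : Circle) : ‖cc z‖ = 1 := Circle.norm_coe z
lemma cc_cont : Continuous cc := continuous_subtype_val
lemma cc_exp (t : ℝ) : cc (Circle.exp t) = Complex.exp (t * Complex.I) := Circle.coe_exp t

def HasLg (γ : Circle → ℂ) : Prop := ∃ L : Circle → ℂ, Continuous L ∧ ∀ z, Complex.exp (L z) = γ z

lemma HasLg.of_near {γ δ : Circle → ℂ} (hγ : Continuous γ) (hδ : Continuous δ)
    (h : ∀ z, ‖δ z - γ z‖ < ‖γ z‖) (H : HasLg γ) : HasLg δ := by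
  obtain ⟨L, hL, hLe⟩ := H
  have h0 : ∀ z, γ z ≠ 0 := fun z hz => by
    have := h z
    rw [hz, norm_zero] at this
    exact absurd this (not_lt.2 (norm_nonneg _))
  have hr : ∀ z, ‖δ z / γ z - 1‖ < 1 := fun z => by
    rw [div_sub_one (h0 z), norm_div, div_lt_one (norm_pos_iff.2 (h0 z))]
    exact h z
  have hs : ∀ z, δ z / γ z ∈ Complex.slitPlane := fun z => by
    have := Complex.mem_slitPlane_of_norm_lt_one (hr z)
    simpa using this
  refine ⟨fun z => L z + Complex.log (δ z / γ z), hL.add ((hδ.div hγ h0).clog hs), fun z => ?_⟩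
  rw [Complex.exp_add, hLe, Complex.exp_log (Complex.slitPlane_ne_zero (hs z))]
  field_simp [h0 z]

lemma HasLg.homotopy (K : unitInterval × Circle → ℂ) (hK : Continuous K) (h0 : ∀ p, K p ≠ 0)
    (H : HasLg fun z => K (0, z)) : HasLg fun z => K (1, z) := by
  have hc : ∀ s, Continuous fun z => K (s, z) := fun s => by fun_prop
  have key : ∀ s0 : unitInterval, ∀ᶠ s in nhds s0, ∀ z ∈ (univ : Set Circle),
      ‖K (s, z) - K (s0, z)‖ < ‖K (s0, z)‖ ∧ ‖K (s0, z) - K (s, z)‖ < ‖K (s, z)‖ := by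
    intro s0
    refine IsCompact.eventually_forall_of_forall_eventually isCompact_univ fun z _ => ?_
    have hp : 0 < ‖K (s0, z)‖ := norm_pos_iff.2 (h0 _)
    refine Filter.Eventually.and ?_ ?_
    · refine ContinuousAt.eventually_lt (f := fun p : unitInterval × Circle => ‖K (p.1, p.2) - K (s0, p.2)‖)
        (g := fun p : unitInterval × Circle => ‖K (s0, p.2)‖) (by fun_prop) (by fun_prop) ?_
      simpa using h0 _
    · refine ContinuousAt.eventually_lt (f := fun p : unitInterval × Circle => ‖K (s0, p.2) - K (p.1, p.2)‖)
        (g := fun p : unitInterval × Circle => ‖K (p.1, p.2)‖) (by fun_prop) (by fun_prop) ?_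
      simpa using h0 _
  let S : Set unitInterval := {s | HasLg fun z => K (s, z)}
  have hS : IsClopen S := by
    constructor
    · rw [← isOpen_compl_iff, isOpen_iff_mem_nhds]
      intro s hs
      filter_upwards [key s] with s' hs' hmem
      exact hs (HasLg.of_near (hc s') (hc s) (fun z => (hs' z trivial).2) hmem)
    · rw [isOpen_iff_mem_nhds]
      intro s hs
      filter_upwards [key s] with s' hs'
      exact HasLg.of_near (hc s) (hc s') (fun z => (hs' z trivial).1) hs
  have : S = univ := hS.eq_univ ⟨0, H⟩
  have h1 : (1 : unitInterval) ∈ S := this ▸ mem_univ _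
  exact h1

lemma HasLg.const {c : ℂ} (hc : c ≠ 0) : HasLg fun _ => c :=
  ⟨fun _ => Complex.log c, continuous_const, fun _ => Complex.exp_log hc⟩

lemma not_HasLg_conj : ¬ HasLg fun z : Circle => (starRingEnd ℂ) (cc z) := by
  rintro ⟨L, hL, hLe⟩
  let φ : ℝ → ℂ := fun θ => L (Circle.exp θ) + θ * Complex.I
  have hφ : Continuous φ := by
    have : Continuous fun θ : ℝ => L (Circle.exp θ) := hL.comp Circle.exp.continuous
    fun_prop
  have h1 : ∀ θ, Complex.exp (φ θ) = 1 := fun θ => by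
    simp only [φ]
    have hz : Complex.exp (L (Circle.exp θ)) = Complex.exp (-(θ * Complex.I)) := by
      rw [hLe]
      beta_reduce
      rw [cc_exp, ← Complex.exp_conj]
      simp
    rw [Complex.exp_add, hz, ← Complex.exp_add]
    simp
  have h2 : ∀ θ, ∃ n : ℤ, φ θ = n * (2 * Real.pi * Complex.I) := fun θ =>
    Complex.exp_eq_one_iff.1 (h1 θ)
  choose n hn using h2
  have hnc : Continuous fun θ => ((n θ : ℤ) : ℝ) := by
    have : (fun θ => ((n θ : ℤ) : ℝ)) = fun θ => (φ θ).im / (2 * Real.pi) := by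
      funext θ
      rw [hn]
      have := Real.pi_pos
      simp
    rw [this]
    exact (Complex.continuous_im.comp hφ).div_const _
  have hnc' : Continuous n := (Int.isClosedEmbedding_coe_real.isEmbedding.continuous_iff).2 hnc
  have hconst : n 0 = n (2 * Real.pi) :=
    (PreconnectedSpace.constant inferInstance hnc')
  have e : φ 0 = φ (2 * Real.pi) := by rw [hn, hn, hconst]
  have := Real.pi_pos
  simp [φ] at e



noncomputable def eul (f : ℝ → ℂ → ℂ) (τ : ℝ) (z : ℂ) : ℕ → ℂ
  | 0 => z
  | k + 1 => eul f τ z k + τ * f (τ * k) (eul f τ z k)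

lemma eul_cont {X : Type*} [TopologicalSpace X] (f : X → ℝ → ℂ → ℂ)
    (hf : Continuous fun p : X × ℝ × ℂ => f p.1 p.2.1 p.2.2) (τ : ℝ) (k : ℕ) :
    Continuous fun p : X × ℂ => eul (f p.1) τ p.2 k := by
  induction k with
  | zero => simpa [eul] using continuous_snd
  | succ k ih =>
    simp only [eul]
    have : Continuous fun p : X × ℂ => f p.1 (τ * k) (eul (f p.1) τ p.2 k) :=
      hf.comp (f := fun p : X × ℂ => (p.1, τ * (k : ℝ), eul (f p.1) τ p.2 k)) (by fun_prop)
    fun_prop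

lemma eul_bound (f : ℝ → ℂ → ℂ) (C : ℝ) (hf : ∀ t z, ‖f t z‖ ≤ C * (1 + ‖z‖))
    (τ : ℝ) (hτ : 0 ≤ τ) (z : ℂ) (k : ℕ) :
    1 + ‖eul f τ z k‖ ≤ Real.exp (C * (τ * k)) * (1 + ‖z‖) := by
  induction k with
  | zero => simp [eul]
  | succ k ih =>
    simp only [eul]
    have h1 : ‖(τ : ℂ) * f (τ * k) (eul f τ z k)‖ ≤ τ * (C * (1 + ‖eul f τ z k‖)) := by
      rw [norm_mul, Complex.norm_real, Real.norm_of_nonneg hτ]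
      exact mul_le_mul_of_nonneg_left (hf _ _) hτ
    have h2 := norm_add_le (eul f τ z k) ((τ : ℂ) * f (τ * k) (eul f τ z k))
    have h3 : 1 + C * τ ≤ Real.exp (C * τ) := by linarith [Real.add_one_le_exp (C * τ)]
    have e : Real.exp (C * (τ * ((k + 1 : ℕ) : ℝ))) = Real.exp (C * τ) * Real.exp (C * (τ * k)) := by
      rw [← Real.exp_add]; push_cast; ring_nf
    calc _ ≤ (1 + C * τ) * (1 + ‖eul f τ z k‖) := by nlinarith
      _ ≤ Real.exp (C * τ) * (Real.exp (C * (τ * k)) * (1 + ‖z‖)) := by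
          apply mul_le_mul h3 ih (by positivity) (by positivity)
      _ = _ := by rw [e]; ring

/-- polygon -/
lemma eul_poly (f : ℝ → ℂ → ℂ) (τ : ℝ) (hτ : 0 < τ) (z : ℂ) (N : ℕ) (L : ℝ)
    (hL : ∀ k ≤ N, ‖f (τ * k) (eul f τ z k)‖ ≤ L) :
    ∃ (κ : ℝ → ℕ) (W : ℝ → ℂ) (Y : ℝ → ℂ), (∀ s, κ s ≤ N) ∧
      (∀ s ∈ Icc 0 (τ * N), |τ * κ s - s| ≤ τ) ∧
      (∀ s, W s = f (τ * κ s) (eul f τ z (κ s))) ∧ Measurable W ∧ (∀ s, ‖W s‖ ≤ L) ∧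
      (∀ t, Y t = z + ∫ s in (0:ℝ)..t, W s) ∧
      (∀ s t, ‖Y s - Y t‖ ≤ L * |s - t|) ∧ Y 0 = z ∧ Y (τ * N) = eul f τ z N ∧
      (∀ s ∈ Icc 0 (τ * N), ‖Y s - eul f τ z (κ s)‖ ≤ L * τ) := by
  let κ : ℝ → ℕ := fun s => min ⌊s / τ⌋₊ N
  let W : ℝ → ℂ := fun s => f (τ * κ s) (eul f τ z (κ s))
  let Y : ℝ → ℂ := fun t => z + ∫ s in (0:ℝ)..t, W s
  have hκ : ∀ s, κ s ≤ N := fun s => min_le_right _ _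
  have hκm : Measurable κ := by
    apply Measurable.min _ measurable_const
    exact Nat.measurable_floor.comp (measurable_id.div_const τ)
  have hWm : Measurable W := by
    have : Measurable fun k : ℕ => f (τ * k) (eul f τ z k) := measurable_from_top
    exact this.comp hκm
  have hWb : ∀ s, ‖W s‖ ≤ L := fun s => hL _ (hκ s)
  have hWi : ∀ a b, IntervalIntegrable W volume a b := fun a b => by
    refine (intervalIntegrable_const (c := L)).mono_fun hWm.aestronglyMeasurable ?_
    filter_upwards with s
    exact (hWb s).trans (le_abs_self _)
  have hLip : ∀ s t, ‖Y s - Y t‖ ≤ L * |s - t| := by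
    intro s t
    have : Y s - Y t = ∫ x in t..s, W x := by
      simp only [Y]
      rw [← intervalIntegral.integral_interval_sub_left (hWi 0 s) (hWi 0 t)]
      ring
    rw [this]
    exact intervalIntegral.norm_integral_le_of_norm_le_const fun x _ => hWb x
  have hY0 : Y 0 = z := by simp [Y]
  have hnode : ∀ k ≤ N, Y (τ * k) = eul f τ z k := by
    intro k
    induction k with
    | zero => intro _; simp [hY0, eul]
    | succ k ih =>
      intro hk
      have h1 : Y (τ * (k + 1 : ℕ)) = Y (τ * k) + ∫ x in (τ * k)..(τ * (k + 1 : ℕ)), W x := by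
        simp only [Y]
        rw [add_assoc, intervalIntegral.integral_add_adjacent_intervals (hWi _ _) (hWi _ _)]
      have h2 : ∫ x in (τ * k)..(τ * (k + 1 : ℕ)), W x
          = ∫ x in (τ * k)..(τ * (k + 1 : ℕ)), f (τ * k) (eul f τ z k) := by
        apply intervalIntegral.integral_congr_ae
        have hne : ∀ᵐ x ∂(volume : Measure ℝ), x ≠ τ * (k + 1 : ℕ) := by
          simp [ae_iff]
        filter_upwards [hne] with x hx hxm
        rw [uIoc_of_le (by push_cast; nlinarith)] at hxm
        have hxl : x < τ * (k + 1 : ℕ) := lt_of_le_of_ne hxm.2 hx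
        have hfl : ⌊x / τ⌋₊ = k := by
          rw [Nat.floor_eq_iff (div_nonneg (le_trans (by positivity) hxm.1.le) hτ.le)]
          constructor
          · rw [le_div_iff₀ hτ]; linarith [hxm.1]
          · rw [div_lt_iff₀ hτ]; push_cast at hxl; linarith
        have : κ x = k := by simp only [κ, hfl]; omega
        simp only [W, this]
      rw [h1, h2, ih (by omega), intervalIntegral.integral_const]
      simp only [eul]
      rw [Complex.real_smul]
      push_cast
      ring
  have hκs : ∀ s ∈ Icc 0 (τ * N), |τ * κ s - s| ≤ τ := by
    intro s hs
    have h0 : (0:ℝ) ≤ s / τ := div_nonneg hs.1 hτ.le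
    have hfN : ⌊s / τ⌋₊ ≤ N := by
      apply Nat.floor_le_of_le
      rw [div_le_iff₀ hτ]; linarith [hs.2]
    have : κ s = ⌊s / τ⌋₊ := by simp only [κ]; omega
    rw [this]
    have h1 := Nat.floor_le h0
    have h2 := Nat.lt_floor_add_one (s / τ)
    rw [le_div_iff₀ hτ] at h1
    rw [div_lt_iff₀ hτ] at h2
    rw [abs_le]; constructor <;> nlinarith
  have hL0 : 0 ≤ L := (norm_nonneg _).trans (hWb 0)
  refine ⟨κ, W, Y, hκ, hκs, fun _ => rfl, hWm, hWb, fun _ => rfl, hLip, hY0, hnode N le_rfl, ?_⟩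
  intro s hs
  rw [← hnode _ (hκ s)]
  refine (hLip _ _).trans ?_
  rw [abs_sub_comm]
  exact mul_le_mul_of_nonneg_left (hκs s hs) hL0

/-- periodic solution -/
def PSol (T : ℝ) (f : ℝ → ℂ → ℂ) (Z : ℝ → ℂ) : Prop :=
  Continuous Z ∧ (∀ t ∈ Icc 0 T, HasDerivAt Z (f t (Z t)) t) ∧ Z 0 = Z T


lemma eul_compact (T : ℝ) (hT : 0 < T) (f : ℝ → ℝ → ℂ → ℂ)
    (hf : Continuous fun p : ℝ × ℝ × ℂ => f p.1 p.2.1 p.2.2) (C : ℝ) (hC : 0 ≤ C)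
    (hfb : ∀ s ∈ Icc (0:ℝ) 1, ∀ t z, ‖f s t z‖ ≤ C * (1 + ‖z‖))
    (ρ : ℝ → ℝ) (hρ : Continuous ρ)
    (hno : ∀ s ∈ Icc (0:ℝ) 1, ∀ Z, PSol T (f s) Z → ‖Z 0‖ ≠ ρ s) :
    ∀ᶠ N : ℕ in atTop, ∀ s ∈ Icc (0:ℝ) 1, ∀ z, ‖z‖ = ρ s →
      eul (f s) (T / N) z N ≠ z := by
  by_contra hcon
  rw [Filter.not_eventually] at hcon
  obtain ⟨φ, hφ, hφP⟩ := Filter.extraction_of_frequently_atTop (hcon.and_eventually (eventually_ge_atTop 1))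
  have hex : ∀ n, ∃ s z, s ∈ Icc (0:ℝ) 1 ∧ ‖z‖ = ρ s ∧ eul (f s) (T / φ n) z (φ n) = z := by
    intro n
    have := (hφP n).1
    push Not at this
    obtain ⟨s, hs, z, hz, h⟩ := this
    exact ⟨s, z, hs, hz, h⟩
  have hφ1 : ∀ n, 1 ≤ φ n := fun n => (hφP n).2
  choose s z hs hz he using hex
  obtain ⟨R, hR⟩ : ∃ R, ∀ x ∈ Icc (0:ℝ) 1, ρ x ≤ R := by
    obtain ⟨R, hR⟩ := isCompact_Icc.bddAbove_image hρ.continuousOn (K := Icc (0:ℝ) 1)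
    exact ⟨R, fun x hx => hR (mem_image_of_mem _ hx)⟩
  set B := Real.exp (C * T) * (1 + R) with hB
  set τ : ℕ → ℝ := fun n => T / φ n with hτ
  have hφp : ∀ n, (0:ℝ) < φ n := fun n => by exact_mod_cast hφ1 n
  have hτp : ∀ n, 0 < τ n := fun n => div_pos hT (hφp n)
  have hτN : ∀ n, τ n * φ n = T := fun n => div_mul_cancel₀ _ (hφp n).ne'
  have hR0 : 0 ≤ R := (norm_nonneg _).trans ((hz 0).le.trans (hR _ (hs 0)))
  have hbd : ∀ n, ∀ k ≤ φ n, 1 + ‖eul (f (s n)) (τ n) (z n) k‖ ≤ B := by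
    intro n k hk
    refine (eul_bound _ C (hfb _ (hs n)) _ (hτp n).le _ _).trans ?_
    have h1 : τ n * k ≤ T := by
      rw [← hτN n]; exact mul_le_mul_of_nonneg_left (by exact_mod_cast hk) (hτp n).le
    have h2 : ‖z n‖ ≤ R := (hz n).le.trans (hR _ (hs n))
    apply mul_le_mul _ (by linarith) (by positivity) (by positivity)
    exact Real.exp_le_exp.2 (mul_le_mul_of_nonneg_left h1 hC)
  have hpoly := fun n => eul_poly (f (s n)) (τ n) (hτp n) (z n) (φ n) (C * B) (fun k hk =>
    (hfb _ (hs n) _ _).trans (mul_le_mul_of_nonneg_left (hbd n k hk) hC))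
  choose κ W Y hκ hκs hW hWm hWb hY hLip hY0 hYN hYκ using hpoly
  simp only [hτN] at hκs hYN hYκ
  have hB0 : 0 ≤ B := by positivity
  -- Arzela-Ascoli
  let y : ℕ → BoundedContinuousFunction (Icc (0:ℝ) T) ℂ := fun n =>
    BoundedContinuousFunction.mkOfCompact ⟨fun t => Y n t, by
      have : Continuous (Y n) := (LipschitzWith.of_dist_le_mul (K := ⟨C * B, by positivity⟩)
        (fun a b => by rw [dist_eq_norm, Real.dist_eq]; exact hLip n a b)).continuous
      exact this.comp continuous_subtype_val⟩
  have hyY : ∀ n t, y n t = Y n t := fun n t => rfl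
  have hcpt : IsCompact (closure (range y)) := by
    refine BoundedContinuousFunction.arzela_ascoli (Metric.closedBall 0 (R + C * B * T))
      (isCompact_closedBall _ _) _ ?_ ?_
    · rintro _ t ⟨n, rfl⟩
      rw [mem_closedBall_zero_iff, hyY]
      have h1 := hLip n t 0
      rw [hY0, sub_zero, abs_of_nonneg t.2.1] at h1
      have h2 : ‖z n‖ ≤ R := (hz n).le.trans (hR _ (hs n))
      have h3 : ‖Y n t‖ ≤ ‖Y n t - z n‖ + ‖z n‖ := by
        simpa using norm_add_le (Y n t - z n) (z n)
      have h4 : C * B * t ≤ C * B * T := mul_le_mul_of_nonneg_left t.2.2 (by positivity)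
      linarith
    · apply Metric.equicontinuous_of_continuity_modulus (fun x => C * B * x)
      · have : Tendsto (fun x : ℝ => C * B * x) (nhds 0) (nhds (C * B * 0)) :=
          (continuous_const.mul continuous_id).tendsto 0
        simpa using this
      · rintro a b ⟨_, n, rfl⟩
        rw [dist_eq_norm]
        exact hLip n a b
  obtain ⟨y0, -, ψ, hψ, hyl⟩ := hcpt.tendsto_subseq (fun n => subset_closure (mem_range_self n))
  obtain ⟨s0, hs0, χ, hχ, hsl⟩ := isCompact_Icc.tendsto_subseq (fun n => hs (ψ n))
  set ξ : ℕ → ℕ := fun n => ψ (χ n) with hξ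
  have hyl' : Tendsto (fun n => y (ξ n)) atTop (nhds y0) := hyl.comp hχ.tendsto_atTop
  have hsl' : Tendsto (fun n => s (ξ n)) atTop (nhds s0) := hsl
  have hptw : ∀ t : Icc (0:ℝ) T, Tendsto (fun n => Y (ξ n) t) atTop (nhds (y0 t)) := fun t =>
    ((BoundedContinuousFunction.evalCLM ℂ t).continuous.tendsto y0).comp hyl'
  have hτl : Tendsto (fun n => τ (ξ n)) atTop (nhds 0) := by
    have h1 : Tendsto (fun n => ξ n) atTop atTop := hψ.tendsto_atTop.comp hχ.tendsto_atTop
    have h2 : Tendsto (fun n => ((φ (ξ n) : ℕ) : ℝ)) atTop atTop :=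
      tendsto_natCast_atTop_atTop.comp (hφ.tendsto_atTop.comp h1)
    exact h2.const_div_atTop T
  let Zc : ℝ → ℂ := IccExtend hT.le y0
  have hZc : Continuous Zc := y0.continuous.Icc_extend'
  have hZcv : ∀ t (ht : t ∈ Icc (0:ℝ) T), Zc t = y0 ⟨t, ht⟩ := fun t ht => IccExtend_of_mem _ _ ht
  have hfc : Continuous fun t => f s0 t (Zc t) :=
    hf.comp (f := fun t : ℝ => (s0, t, Zc t)) (by fun_prop)
  let Z : ℝ → ℂ := fun t => Zc 0 + ∫ x in (0:ℝ)..t, f s0 x (Zc x)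
  have hWl : ∀ x ∈ Icc (0:ℝ) T, Tendsto (fun n => W (ξ n) x) atTop (nhds (f s0 x (Zc x))) := by
    intro x hx
    have h1 : Tendsto (fun n => τ (ξ n) * κ (ξ n) x) atTop (nhds x) := by
      rw [tendsto_iff_dist_tendsto_zero]
      exact squeeze_zero (fun _ => dist_nonneg) (fun n => hκs (ξ n) x hx) hτl
    have h2 : Tendsto (fun n => eul (f (s (ξ n))) (τ (ξ n)) (z (ξ n)) (κ (ξ n) x)) atTop
        (nhds (Zc x)) := by
      rw [hZcv x hx]
      have h3 : Tendsto (fun n => Y (ξ n) x - eul (f (s (ξ n))) (τ (ξ n)) (z (ξ n)) (κ (ξ n) x))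
          atTop (nhds 0) := by
        refine squeeze_zero_norm (fun n => hYκ (ξ n) x hx) ?_
        simpa using hτl.const_mul (C * B)
      simpa using (hptw ⟨x, hx⟩).sub h3
    have h4 := (hf.tendsto (s0, x, Zc x)).comp (hsl'.prodMk_nhds (h1.prodMk_nhds h2))
    refine h4.congr fun n => ?_
    simp only [Function.comp, hW]
  have hzl : Tendsto (fun n => z (ξ n)) atTop (nhds (Zc 0)) := by
    have := hptw ⟨0, le_rfl, hT.le⟩
    simp only [hY0] at this
    rwa [hZcv 0 ⟨le_rfl, hT.le⟩]
  have hZeq : ∀ t ∈ Icc (0:ℝ) T, Zc t = Z t := by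
    intro t ht
    have h1 : Tendsto (fun n => z (ξ n) + ∫ x in (0:ℝ)..t, W (ξ n) x) atTop (nhds (Z t)) := by
      refine hzl.add ?_
      refine intervalIntegral.tendsto_integral_filter_of_dominated_convergence (fun _ => C * B)
        (Eventually.of_forall fun n => (hWm (ξ n)).aestronglyMeasurable)
        (Eventually.of_forall fun n => Eventually.of_forall fun x _ => hWb (ξ n) x)
        intervalIntegrable_const (Eventually.of_forall fun x hx => ?_)
      rw [uIoc_of_le ht.1] at hx
      exact hWl x ⟨hx.1.le, hx.2.trans ht.2⟩
    have h2 := hptw ⟨t, ht⟩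
    rw [← hZcv t ht] at h2
    refine tendsto_nhds_unique h2 (h1.congr fun n => ?_)
    rw [hY]
  have hder : ∀ t, HasDerivAt Z (f s0 t (Zc t)) t := fun t =>
    (hfc.integral_hasStrictDerivAt 0 t).hasDerivAt.const_add _
  have h0T : (0:ℝ) ∈ Icc (0:ℝ) T := ⟨le_rfl, hT.le⟩
  have hTT : T ∈ Icc (0:ℝ) T := ⟨hT.le, le_rfl⟩
  refine hno s0 hs0 Z ⟨?_, ?_, ?_⟩ ?_
  · exact continuous_iff_continuousAt.2 fun t => (hder t).continuousAt
  · intro t ht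
    rw [← hZeq t ht]
    exact hder t
  · rw [← hZeq _ h0T, ← hZeq _ hTT]
    have h2 := hptw ⟨T, hTT⟩
    rw [← hZcv T hTT] at h2
    refine tendsto_nhds_unique hzl (h2.congr fun n => ?_)
    change Y (ξ n) T = _
    rw [hYN, he]
  · rw [← hZeq _ h0T]
    refine tendsto_nhds_unique hzl.norm (((hρ.tendsto s0).comp hsl').congr fun n => ?_)
    simp [hz]

lemma eul_step (T : ℝ) (hT : 0 < T) (f : ℝ → ℝ → ℂ → ℂ)
    (hf : Continuous fun p : ℝ × ℝ × ℂ => f p.1 p.2.1 p.2.2) (C : ℝ) (hC : 0 ≤ C)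
    (hfb : ∀ s ∈ Icc (0:ℝ) 1, ∀ t z, ‖f s t z‖ ≤ C * (1 + ‖z‖))
    (ρ : ℝ → ℝ) (hρ : Continuous ρ) (hρ0 : ∀ s ∈ Icc (0:ℝ) 1, 0 ≤ ρ s)
    (hno : ∀ s ∈ Icc (0:ℝ) 1, ∀ Z, PSol T (f s) Z → ‖Z 0‖ ≠ ρ s) :
    ∀ᶠ N : ℕ in atTop,
      ((HasLg fun w : Circle => eul (f 0) (T / N) (ρ 0 * cc w) N - ρ 0 * cc w) ∨ ρ 0 = 0) →
      (HasLg fun w : Circle => eul (f 1) (T / N) (ρ 1 * cc w) N - ρ 1 * cc w) := by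
  filter_upwards [eul_compact T hT f hf C hC hfb ρ hρ hno] with N hN hH
  have hnn : ∀ s ∈ Icc (0:ℝ) 1, ∀ w : Circle,
      eul (f s) (T / N) (ρ s * cc w) N - ρ s * cc w ≠ 0 := fun s hs w => by
    rw [sub_ne_zero]
    refine hN s hs _ ?_
    rw [norm_mul, Complex.norm_real, Real.norm_of_nonneg (hρ0 s hs), cc_norm, mul_one]
  let K : unitInterval × Circle → ℂ := fun p =>
    eul (f p.1) (T / N) (ρ p.1 * cc p.2) N - ρ p.1 * cc p.2
  have hw : Continuous fun p : unitInterval × Circle => ((ρ p.1 : ℝ) : ℂ) * cc p.2 := by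
    refine Continuous.mul ?_ ?_
    · exact Complex.continuous_ofReal.comp (hρ.comp (continuous_subtype_val.comp continuous_fst))
    · exact cc_cont.comp continuous_snd
  have hK : Continuous K := by
    refine Continuous.sub ?_ hw
    exact (eul_cont f hf (T / N) N).comp
      (f := fun p : unitInterval × Circle => ((p.1 : ℝ), ((ρ p.1 : ℝ) : ℂ) * cc p.2))
      ((continuous_subtype_val.comp continuous_fst).prodMk hw)
  have := HasLg.homotopy K hK (fun p => hnn _ p.1.2 p.2) ?_
  · simpa [K] using this
  · rcases hH with hH | hH
    · simpa [K] using hH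
    · have h1 := HasLg.const (hnn 0 ⟨le_rfl, zero_le_one⟩ 1)
      simp only [hH, K] at h1 ⊢
      simpa [hH] using h1


lemma eul_saddle (f : ℝ → ℂ → ℂ) (hf : ∀ t z, f t z = Complex.I * (starRingEnd ℂ) z) (τ : ℝ) (z : ℂ)
    (k : ℕ) : eul f τ z k = (((1 + τ) ^ k + (1 - τ) ^ k) / 2 : ℝ) * z +
      (((1 + τ) ^ k - (1 - τ) ^ k) / 2 : ℝ) * (Complex.I * (starRingEnd ℂ) z) := by
  induction k with
  | zero => simp [eul]
  | succ k ih =>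
    simp only [eul]
    rw [ih, hf]
    simp only [map_add, map_mul, Complex.conj_ofReal, Complex.conj_I, Complex.conj_conj]
    push_cast
    linear_combination (-(τ * z * (((1:ℂ) + τ) ^ k - (1 - τ) ^ k) / 2)) * Complex.I_sq

lemma saddle_no_log (f : ℝ → ℂ → ℂ) (hf : ∀ t z, f t z = Complex.I * (starRingEnd ℂ) z) (τ r : ℝ)
    (hr : 0 < r) (h0 : 0 < τ) (h1 : τ < 1) (N : ℕ) (hN : N ≠ 0) :
    ¬ HasLg fun w : Circle => eul f τ (r * cc w) N - r * cc w := by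
  intro H
  set α : ℝ := ((1 + τ) ^ N + (1 - τ) ^ N) / 2 - 1 with hα
  set β : ℝ := ((1 + τ) ^ N - (1 - τ) ^ N) / 2 with hβ
  have e1 : 1 < (1 + τ) ^ N := one_lt_pow₀ (by linarith) hN
  have e2 : (1 - τ) ^ N < 1 := pow_lt_one₀ (by linarith) (by linarith) hN
  have hab : |α| < β := by rw [abs_lt]; constructor <;> linarith
  have hβ0 : 0 < β := (abs_nonneg _).trans_lt hab
  have hF : (fun w : Circle => eul f τ (r * cc w) N - r * cc w) = fun w : Circle =>
      (r * α : ℝ) * cc w + (r * β : ℝ) * (Complex.I * (starRingEnd ℂ) (cc w)) := by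
    funext w
    rw [eul_saddle f hf]
    simp only [map_mul, Complex.conj_ofReal, hα, hβ]
    push_cast
    ring
  rw [hF] at H
  let K : unitInterval × Circle → ℂ := fun p => ((1 - p.1.1) * (r * α) : ℝ) * cc p.2 +
    (r * β : ℝ) * (Complex.I * (starRingEnd ℂ) (cc p.2))
  have hc2 : Continuous fun p : unitInterval × Circle => cc p.2 := cc_cont.comp continuous_snd
  have hK : Continuous K := by
    have h3 : Continuous fun p : unitInterval × Circle => (starRingEnd ℂ) (cc p.2) :=
      Complex.continuous_conj.comp hc2
    have h4 : Continuous fun p : unitInterval × Circle => (((1 - p.1.1) * (r * α) : ℝ) : ℂ) := by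
      fun_prop
    exact (h4.mul hc2).add (continuous_const.mul (continuous_const.mul h3))
  have hK0 : ∀ p, K p ≠ 0 := by
    intro p hp
    have : ‖(((1 - p.1.1) * (r * α) : ℝ) : ℂ) * cc p.2‖
        = ‖((r * β : ℝ) : ℂ) * (Complex.I * (starRingEnd ℂ) (cc p.2))‖ := by
      rw [eq_neg_of_add_eq_zero_left hp, norm_neg]
    simp only [norm_mul, Complex.norm_real, cc_norm, Complex.norm_I, RCLike.norm_conj, mul_one, one_mul,
      Real.norm_eq_abs] at this
    rw [abs_of_pos hr, abs_of_pos hβ0, abs_of_nonneg (by linarith [p.1.2.2])] at this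
    have h5 : (1 - p.1.1) * (r * |α|) ≤ r * |α| :=
      mul_le_of_le_one_left (by positivity) (by linarith [p.1.2.1])
    nlinarith
  have := HasLg.homotopy K hK hK0 (by simpa [K] using H)
  obtain ⟨L, hL, hLe⟩ := this
  apply not_HasLg_conj
  have hc : ((r * β : ℝ) : ℂ) * Complex.I ≠ 0 := by
    simp [hr.ne', hβ0.ne']
  refine ⟨fun w => L w - Complex.log (((r * β : ℝ) : ℂ) * Complex.I), hL.sub continuous_const, ?_⟩
  intro w
  rw [Complex.exp_sub, hLe, Complex.exp_log hc, div_eq_iff hc]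
  simp [K]
  ring


structure RS (T : ℝ) (h : ℝ → ℝ) (f : ℝ → ℝ → ℝ) (u v : ℝ → ℝ) : Prop where
  uc : Continuous u
  vc : Continuous v
  du : ∀ t ∈ Icc 0 T, HasDerivAt u (v t) t
  dv : ∀ t ∈ Icc 0 T, HasDerivAt v (-h (u t) * v t - f t (u t)) t
  pu : u 0 = u T
  pv : v 0 = v T

lemma anti_of {q q' : ℝ → ℝ} {a b : ℝ} (hq : ∀ t ∈ Icc a b, HasDerivAt q (q' t) t)
    (h : ∀ t ∈ Icc a b, q' t ≤ 0) : AntitoneOn q (Icc a b) := by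
  refine antitoneOn_of_deriv_nonpos (convex_Icc a b)
    (fun t ht => (hq t ht).continuousAt.continuousWithinAt) ?_ ?_
  · intro t ht
    exact (hq t (interior_subset ht)).differentiableAt.differentiableWithinAt
  · intro t ht
    rw [(hq t (interior_subset ht)).deriv]
    exact h t (interior_subset ht)

lemma mono_of {q q' : ℝ → ℝ} {a b : ℝ} (hq : ∀ t ∈ Icc a b, HasDerivAt q (q' t) t)
    (h : ∀ t ∈ Icc a b, 0 ≤ q' t) : MonotoneOn q (Icc a b) := by
  refine monotoneOn_of_deriv_nonneg (convex_Icc a b)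
    (fun t ht => (hq t ht).continuousAt.continuousWithinAt) ?_ ?_
  · intro t ht
    exact (hq t (interior_subset ht)).differentiableAt.differentiableWithinAt
  · intro t ht
    rw [(hq t (interior_subset ht)).deriv]
    exact h t (interior_subset ht)

lemma santi_of {q q' : ℝ → ℝ} {a b : ℝ} (hq : ∀ t ∈ Icc a b, HasDerivAt q (q' t) t)
    (h : ∀ t ∈ Ioo a b, q' t < 0) : StrictAntiOn q (Icc a b) := by
  refine strictAntiOn_of_deriv_neg (convex_Icc a b)
    (fun t ht => (hq t ht).continuousAt.continuousWithinAt) ?_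
  intro t ht
  rw [(hq t (interior_subset ht)).deriv]
  rw [interior_Icc] at ht
  exact h t ht

lemma crit_min {T : ℝ} (hT : 0 < T) {u v : ℝ → ℝ} (du : ∀ t ∈ Icc 0 T, HasDerivAt u (v t) t)
    (pu : u 0 = u T) (pv : v 0 = v T) {t0 : ℝ} (ht0 : t0 ∈ Icc 0 T) (hm : ∀ t ∈ Icc 0 T, u t0 ≤ u t) :
    v t0 = 0 ∧ ∃ t1 ∈ Ico 0 T, u t1 = u t0 ∧ v t1 = 0 := by
  have key : u 0 = u t0 → v 0 = 0 := by
    intro h0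
    have h1 : 0 ≤ v 0 := by
      have := (du 0 ⟨le_rfl, hT.le⟩).tendsto_slope_zero_right
      refine ge_of_tendsto this ?_
      have hT' : Ioo 0 T ∈ nhdsWithin (0:ℝ) (Ioi 0) := Ioo_mem_nhdsGT hT
      filter_upwards [hT'] with t ht
      have := hm (0 + t) (by constructor <;> linarith [ht.1, ht.2])
      have h2 : 0 ≤ t⁻¹ := inv_nonneg.2 ht.1.le
      rw [smul_eq_mul]
      exact mul_nonneg h2 (by linarith)
    have h2 : v T ≤ 0 := by
      have := (du T ⟨hT.le, le_rfl⟩).tendsto_slope_zero_left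
      refine le_of_tendsto this ?_
      have hT' : Ioo (-T) 0 ∈ nhdsWithin (0:ℝ) (Iio 0) := Ioo_mem_nhdsLT (by linarith)
      filter_upwards [hT'] with t ht
      have := hm (T + t) (by constructor <;> linarith [ht.1, ht.2])
      have h2 : t⁻¹ ≤ 0 := inv_nonpos.2 ht.2.le
      rw [smul_eq_mul]
      exact mul_nonpos_of_nonpos_of_nonneg h2 (by linarith)
    linarith
  rcases eq_or_lt_of_le ht0.1 with h | h
  · subst h
    exact ⟨key rfl, 0, ⟨le_rfl, hT⟩, rfl, key rfl⟩
  rcases eq_or_lt_of_le ht0.2 with h' | h'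
  · subst h'
    exact ⟨pv ▸ key pu, 0, ⟨le_rfl, hT⟩, pu, key pu⟩
  have : v t0 = 0 := by
    have hl : IsLocalMin u t0 := by
      filter_upwards [Icc_mem_nhds h h'] with t ht using hm t ht
    exact hl.hasDerivAt_eq_zero (du t0 ht0)
  exact ⟨this, t0, ⟨ht0.1, h'⟩, rfl, this⟩

lemma crit_max {T : ℝ} (hT : 0 < T) {u v : ℝ → ℝ} (du : ∀ t ∈ Icc 0 T, HasDerivAt u (v t) t)
    (pu : u 0 = u T) (pv : v 0 = v T) {t0 : ℝ} (ht0 : t0 ∈ Icc 0 T) (hm : ∀ t ∈ Icc 0 T, u t ≤ u t0) :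
    v t0 = 0 := by
  have := (crit_min hT (u := fun t => - u t) (v := fun t => - v t) (fun t ht => (du t ht).neg)
    (by simp [pu]) (by simp [pv]) ht0 (fun t ht => neg_le_neg (hm t ht))).1
  simpa using this

lemma RS.factor {T : ℝ} (hT : 0 < T) {h : ℝ → ℝ} {f : ℝ → ℝ → ℝ} {u v : ℝ → ℝ} (R : RS T h f u v)
    (hc : Continuous h) {C : ℝ} (hC : ∀ s, |h s| ≤ C) :
    ∃ E : ℝ → ℝ, (∀ t, 0 < E t) ∧ (∀ t ∈ Icc 0 T, (Real.exp (C * T))⁻¹ ≤ E t ∧ E t ≤ Real.exp (C * T)) ∧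
      ∀ t ∈ Icc 0 T, HasDerivAt (fun t => E t * v t) (-(E t * f t (u t))) t := by
  have hhu : Continuous fun x => h (u x) := hc.comp R.uc
  refine ⟨fun t => Real.exp (∫ x in (0:ℝ)..t, h (u x)), fun t => Real.exp_pos _, ?_, ?_⟩
  · intro t ht
    have hb : |∫ x in (0:ℝ)..t, h (u x)| ≤ C * |t - 0| := by
      rw [← Real.norm_eq_abs]
      exact intervalIntegral.norm_integral_le_of_norm_le_const fun x _ => hC _
    have hC0 : 0 ≤ C := (abs_nonneg _).trans (hC 0)
    rw [sub_zero, abs_of_nonneg ht.1] at hb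
    have hb2 : C * t ≤ C * T := mul_le_mul_of_nonneg_left ht.2 hC0
    have := abs_le.1 (hb.trans hb2)
    rw [← Real.exp_neg]
    exact ⟨Real.exp_le_exp.2 this.1, Real.exp_le_exp.2 this.2⟩
  · intro t ht
    have h1 : HasDerivAt (fun t => ∫ x in (0:ℝ)..t, h (u x)) (h (u t)) t :=
      (hhu.integral_hasStrictDerivAt 0 t).hasDerivAt
    refine (h1.exp.mul (R.dv t ht)).congr_deriv ?_
    ring

lemma RS.nonneg {T : ℝ} (hT : 0 < T) {h : ℝ → ℝ} {f : ℝ → ℝ → ℝ} {u v : ℝ → ℝ} (R : RS T h f u v)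
    (hc : Continuous h) {C : ℝ} (hC : ∀ s, |h s| ≤ C) (hf : ∀ t, ∀ s < 0, 0 < f t s) :
    ∀ t ∈ Icc 0 T, 0 ≤ u t := by
  obtain ⟨t0, ht0, hm⟩ := isCompact_Icc.exists_isMinOn (nonempty_Icc.2 hT.le) R.uc.continuousOn
  have hm' : ∀ t ∈ Icc 0 T, u t0 ≤ u t := fun t ht => hm ht
  by_contra! hcon
  obtain ⟨t2, ht2, hneg⟩ := hcon
  have hneg0 : u t0 < 0 := (hm' t2 ht2).trans_lt hneg
  obtain ⟨-, t1, ht1, hu1, hv1⟩ := crit_min hT R.du R.pu R.pv ht0 hm'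
  obtain ⟨E, hE0, -, hq⟩ := R.factor hT hc hC
  have hev : ∀ᶠ t in nhds t1, u t < 0 :=
    (R.uc.continuousAt).eventually_lt continuousAt_const (by rw [hu1]; exact hneg0)
  obtain ⟨δ, hδ, hball⟩ := Metric.eventually_nhds_iff.1 hev
  set b := min (t1 + δ / 2) T
  have hb1 : t1 < b := lt_min (by linarith) ht1.2
  have hbT : b ≤ T := min_le_right _ _
  have hbδ : b ≤ t1 + δ / 2 := min_le_left _ _
  have hsub : ∀ t ∈ Icc t1 b, t ∈ Icc 0 T := fun t ht => ⟨ht1.1.trans ht.1, ht.2.trans hbT⟩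
  have hun : ∀ t ∈ Icc t1 b, u t < 0 := fun t ht => hball (by
    rw [Real.dist_eq, abs_of_nonneg (by linarith [ht.1])]; linarith [ht.2])
  have hqa := santi_of (fun t ht => hq t (hsub t ht)) (fun t ht => by
    have ht' : t ∈ Icc t1 b := Ioo_subset_Icc_self ht
    have := mul_pos (hE0 t) (hf t _ (hun t ht'))
    linarith)
  have hvn : ∀ t ∈ Ioo t1 b, v t < 0 := by
    intro t ht
    have := hqa ⟨le_rfl, hb1.le⟩ (Ioo_subset_Icc_self ht) ht.1
    simp only [hv1, mul_zero] at this
    exact (mul_neg_iff.1 this).elim (fun h => h.2) (fun h => absurd h.1 (hE0 t).le.not_gt)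
  have := santi_of (fun t ht => R.du t (hsub t ht)) hvn ⟨le_rfl, hb1.le⟩ ⟨hb1.le, le_rfl⟩ hb1
  have h3 := hm' b (hsub b ⟨hb1.le, le_rfl⟩)
  linarith

lemma RS.max_in {T : ℝ} (hT : 0 < T) {h : ℝ → ℝ} {f : ℝ → ℝ → ℝ} {u v : ℝ → ℝ} (R : RS T h f u v)
    (hc : Continuous h) {C : ℝ} (hC : ∀ s, |h s| ≤ C) (S : Set ℝ) (hS : IsClosed S)
    (hSn : (S ∩ Icc 0 T).Nonempty)
    (hf : ∀ t ∈ Icc 0 T, t ∉ S → f t (u t) ≤ 0) :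
    ∃ s ∈ S ∩ Icc 0 T, ∀ t ∈ Icc 0 T, u t ≤ u s := by
  obtain ⟨t0, ht0, hm⟩ := isCompact_Icc.exists_isMaxOn (nonempty_Icc.2 hT.le) R.uc.continuousOn
  have hm' : ∀ t ∈ Icc 0 T, u t ≤ u t0 := fun t ht => hm ht
  obtain ⟨E, hE0, -, hq⟩ := R.factor hT hc hC
  have step : ∀ x ∈ Icc 0 T, u x = u t0 → ∀ b ∈ Icc x T, (∀ t ∈ Ico x b, t ∉ S) → u t0 ≤ u b := by
    intro x hx hux b hb hns
    have hvx : v x = 0 := crit_max hT R.du R.pu R.pv hx (fun t ht => by rw [hux]; exact hm' t ht)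
    have hsub : ∀ t ∈ Icc x b, t ∈ Icc 0 T := fun t ht => ⟨hx.1.trans ht.1, ht.2.trans hb.2⟩
    have hq0 : ∀ t ∈ Ico x b, 0 ≤ v t := by
      intro t ht
      have hmo := mono_of (a := x) (b := t) (fun r hr => hq r (hsub r ⟨hr.1, hr.2.trans ht.2.le⟩))
        (fun r hr => by
          have := hf r (hsub r ⟨hr.1, hr.2.trans ht.2.le⟩) (hns r ⟨hr.1, hr.2.trans_lt ht.2⟩)
          have h2 := hE0 r
          nlinarith)
      have := hmo ⟨le_rfl, ht.1⟩ ⟨ht.1, le_rfl⟩ ht.1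
      simp only [hvx, mul_zero] at this
      exact nonneg_of_mul_nonneg_right this (hE0 t)
    have hmon : MonotoneOn u (Icc x b) := by
      refine monotoneOn_of_deriv_nonneg (convex_Icc _ _) R.uc.continuousOn ?_ ?_
      · intro t ht
        exact (R.du t (hsub t (interior_subset ht))).differentiableAt.differentiableWithinAt
      · intro t ht
        rw [(R.du t (hsub t (interior_subset ht))).deriv]
        rw [interior_Icc] at ht
        exact hq0 t ⟨ht.1.le, ht.2⟩
    rw [← hux]
    exact hmon ⟨le_rfl, hb.1⟩ ⟨hb.1, le_rfl⟩ hb.1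
  have case1 : ∀ x ∈ Icc 0 T, u x = u t0 → (S ∩ Icc x T).Nonempty →
      ∃ s ∈ S ∩ Icc 0 T, ∀ t ∈ Icc 0 T, u t ≤ u s := by
    intro x hx hux hne
    have hcomp : IsCompact (S ∩ Icc x T) := isCompact_Icc.inter_left hS
    have hmem := hcomp.sInf_mem hne
    set b := sInf (S ∩ Icc x T)
    have := step x hx hux b hmem.2 (fun t ht htS => by
      have : b ≤ t := csInf_le hcomp.bddBelow ⟨htS, ht.1, ht.2.le.trans hmem.2.2⟩
      exact absurd ht.2 this.not_gt)
    exact ⟨b, ⟨hmem.1, hx.1.trans hmem.2.1, hmem.2.2⟩, fun t ht => (hm' t ht).trans this⟩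
  by_cases hne : (S ∩ Icc t0 T).Nonempty
  · exact case1 t0 ht0 rfl hne
  · have := step t0 ht0 rfl T ⟨ht0.2, le_rfl⟩ (fun t ht htS => hne ⟨t, htS, ht.1, ht.2.le⟩)
    have h0 : u 0 = u t0 := by
      rw [R.pu]
      exact le_antisymm (hm' T ⟨hT.le, le_rfl⟩) this
    exact case1 0 ⟨le_rfl, hT.le⟩ h0 hSn


lemma RS.slope {T : ℝ} (hT : 0 < T) {h : ℝ → ℝ} {f : ℝ → ℝ → ℝ} {u v : ℝ → ℝ} (R : RS T h f u v)
    (hc : Continuous h) {C : ℝ} (hC : ∀ s, |h s| ≤ C) (hu : ∀ t ∈ Icc 0 T, 0 ≤ u t)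
    {σ τ ε c d M xs m : ℝ} (hσ : 0 ≤ σ) (hτ : τ ≤ T) (hε : 0 < ε) (hc1 : σ + ε ≤ c) (hcd : c ≤ d)
    (hd : d ≤ τ - ε) (hf : ∀ t ∈ Icc σ τ, 0 ≤ f t (u t)) (hxs : xs ∈ Icc σ τ) (hM : u xs = M)
    (hMm : ∀ t ∈ Icc σ τ, u t ≤ M) :
    (∀ t ∈ Icc c d, M ≤ (1 + Real.exp (C * T) ^ 2 * T / ε) * u t) ∧
    (0 ≤ m → (∀ t ∈ Icc c d, m ≤ f t (u t)) → m * (d - c) ≤ 2 * Real.exp (C * T) ^ 2 * M / ε) := by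
  obtain ⟨E, hE0, hEb, hq⟩ := R.factor hT hc hC
  set D := Real.exp (C * T) with hD
  have hD0 : 0 < D := Real.exp_pos _
  have hsub : ∀ t ∈ Icc σ τ, t ∈ Icc 0 T := fun t ht => ⟨hσ.trans ht.1, ht.2.trans hτ⟩
  set q : ℝ → ℝ := fun t => E t * v t with hqdef
  have hvq : ∀ t, v t = q t / E t := fun t => by
    simp only [hqdef]; field_simp [(hE0 t).ne']
  have hanti : AntitoneOn q (Icc σ τ) := anti_of (fun t ht => hq t (hsub t ht)) (fun t ht => by
    have := mul_nonneg (hE0 t).le (hf t ht); linarith)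
  -- bounds for x / E
  have hlo : ∀ t ∈ Icc 0 T, ∀ x, 0 ≤ x → x / D ≤ x / E t := fun t ht x hx =>
    div_le_div_of_nonneg_left hx (hE0 t) (hEb t ht).2
  have hhi : ∀ t ∈ Icc 0 T, ∀ x, 0 ≤ x → x / E t ≤ x * D := fun t ht x hx => by
    rw [div_eq_mul_inv]
    refine mul_le_mul_of_nonneg_left ?_ hx
    rw [inv_le_comm₀ (hE0 t) hD0]
    exact (hEb t ht).1
  have hqp : ∀ t ∈ Icc c d, q t ≤ D * u t / ε := by
    intro t ht
    have htI : t ∈ Icc σ τ := ⟨by linarith [ht.1], by linarith [ht.2]⟩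
    have hut := hu t (hsub t htI)
    rcases le_or_gt (q t) 0 with h0 | h0
    · exact h0.trans (by positivity)
    have hmo : MonotoneOn (fun x => u x - q t / D * x) (Icc σ t) := by
      refine mono_of (q' := fun x => v x - q t / D * 1) (fun x hx => ?_) (fun x hx => ?_)
      · exact (R.du x (hsub x ⟨hx.1, hx.2.trans htI.2⟩)).sub ((hasDerivAt_id x).const_mul _)
      · have hxI : x ∈ Icc σ τ := ⟨hx.1, hx.2.trans htI.2⟩
        have h1 := hanti hxI htI hx.2
        have h2 := hlo x (hsub x hxI) (q x) (h0.le.trans h1)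
        have h3 : q t / D ≤ q x / D := div_le_div_of_nonneg_right h1 hD0.le
        have h4 := hvq x
        linarith
    have h1 := hmo ⟨le_rfl, htI.1⟩ ⟨htI.1, le_rfl⟩ htI.1
    have h2 := hu σ (hsub σ ⟨le_rfl, htI.1.trans htI.2⟩)
    have h3 : q t / D * ε ≤ q t / D * (t - σ) :=
      mul_le_mul_of_nonneg_left (by linarith [ht.1]) (by positivity)
    simp only at h1
    have h4 : q t / D * ε ≤ u t := by linarith
    rw [le_div_iff₀ hε]
    rw [div_mul_eq_mul_div, div_le_iff₀ hD0] at h4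
    linarith
  have hqn : ∀ t ∈ Icc c d, - q t ≤ D * u t / ε := by
    intro t ht
    have htI : t ∈ Icc σ τ := ⟨by linarith [ht.1], by linarith [ht.2]⟩
    have hut := hu t (hsub t htI)
    rcases le_or_gt (-q t) 0 with h0 | h0
    · exact h0.trans (by positivity)
    have hmo : AntitoneOn (fun x => u x + (-q t) / D * x) (Icc t τ) := by
      refine anti_of (q' := fun x => v x + (-q t) / D * 1) (fun x hx => ?_) (fun x hx => ?_)
      · exact (R.du x (hsub x ⟨htI.1.trans hx.1, hx.2⟩)).add ((hasDerivAt_id x).const_mul _)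
      · have hxI : x ∈ Icc σ τ := ⟨htI.1.trans hx.1, hx.2⟩
        have h1 := hanti htI hxI hx.1
        have h2 := hlo x (hsub x hxI) (-q x) (by linarith)
        have h3 : (-q t) / D ≤ (-q x) / D := div_le_div_of_nonneg_right (by linarith) hD0.le
        have h4 := hvq x
        rw [neg_div (E x)] at h2
        linarith
    have h1 := hmo ⟨le_rfl, htI.2⟩ ⟨htI.2, le_rfl⟩ htI.2
    have h2 := hu τ (hsub τ ⟨htI.1.trans htI.2, le_rfl⟩)
    have h3 : (-q t) / D * ε ≤ (-q t) / D * (τ - t) :=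
      mul_le_mul_of_nonneg_left (by linarith [ht.2]) (by positivity)
    simp only at h1
    have h4 : (-q t) / D * ε ≤ u t := by linarith
    rw [le_div_iff₀ hε]
    rw [div_mul_eq_mul_div, div_le_iff₀ hD0] at h4
    linarith
  constructor
  · intro t ht
    have htI : t ∈ Icc σ τ := ⟨by linarith [ht.1], by linarith [ht.2]⟩
    have hut := hu t (hsub t htI)
    set A := D * u t / ε with hA
    have hA0 : 0 ≤ A := by positivity
    have hgoal : (1 + D ^ 2 * T / ε) * u t = u t + A * D * T := by rw [hA]; ring
    rw [hgoal]
    rcases le_total t xs with hx | hx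
    · have hmo : AntitoneOn (fun x => u x - A * D * x) (Icc t xs) := by
        refine anti_of (q' := fun x => v x - A * D * 1) (fun x hx' => ?_) (fun x hx' => ?_)
        · exact (R.du x (hsub x ⟨htI.1.trans hx'.1, hx'.2.trans hxs.2⟩)).sub
            ((hasDerivAt_id x).const_mul _)
        · have hxI : x ∈ Icc σ τ := ⟨htI.1.trans hx'.1, hx'.2.trans hxs.2⟩
          have h1 := (hanti htI hxI hx'.1).trans (hqp t ht)
          have h2 := hhi x (hsub x hxI) A hA0
          have h3 : q x / E x ≤ A / E x := div_le_div_of_nonneg_right h1 (hE0 x).le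
          have h4 := hvq x
          linarith
      have h1 := hmo ⟨le_rfl, hx⟩ ⟨hx, le_rfl⟩ hx
      simp only [hM] at h1
      have h3 : A * D * (xs - t) ≤ A * D * T :=
        mul_le_mul_of_nonneg_left (by linarith [hxs.2, htI.1]) (by positivity)
      linarith
    · have hmo : MonotoneOn (fun x => u x + A * D * x) (Icc xs t) := by
        refine mono_of (q' := fun x => v x + A * D * 1) (fun x hx' => ?_) (fun x hx' => ?_)
        · exact (R.du x (hsub x ⟨hxs.1.trans hx'.1, hx'.2.trans htI.2⟩)).add
            ((hasDerivAt_id x).const_mul _)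
        · have hxI : x ∈ Icc σ τ := ⟨hxs.1.trans hx'.1, hx'.2.trans htI.2⟩
          have h1 : -q x ≤ A := (neg_le_neg (hanti hxI htI hx'.2)).trans (hqn t ht)
          have h2 := hhi x (hsub x hxI) A hA0
          have h3 : -q x / E x ≤ A / E x := div_le_div_of_nonneg_right h1 (hE0 x).le
          have h4 := hvq x
          rw [neg_div (E x)] at h3
          linarith
      have h1 := hmo ⟨le_rfl, hx⟩ ⟨hx, le_rfl⟩ hx
      simp only [hM] at h1
      have h3 : A * D * (t - xs) ≤ A * D * T :=
        mul_le_mul_of_nonneg_left (by linarith [hxs.1, htI.2]) (by positivity)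
      linarith
  · intro hm0 hm
    have hsubJ : ∀ t ∈ Icc c d, t ∈ Icc σ τ := fun t ht => ⟨by linarith [ht.1], by linarith [ht.2]⟩
    have hmo : AntitoneOn (fun x => q x + m / D * x) (Icc c d) := by
      refine anti_of (q' := fun x => -(E x * f x (u x)) + m / D * 1) (fun x hx => ?_) (fun x hx => ?_)
      · exact (hq x (hsub x (hsubJ x hx))).add ((hasDerivAt_id x).const_mul _)
      · have h1 := (hEb x (hsub x (hsubJ x hx))).1
        have h2 : m / D ≤ E x * f x (u x) := by
          rw [div_eq_inv_mul]
          exact mul_le_mul h1 (hm x hx) hm0 (hE0 x).le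
        linarith
    have h1 := hmo ⟨le_rfl, hcd⟩ ⟨hcd, le_rfl⟩ hcd
    simp only at h1
    have h2 := hqp c ⟨le_rfl, hcd⟩
    have h3 := hqn d ⟨hcd, le_rfl⟩
    have h4 : D * u c / ε ≤ D * M / ε := by
      have := hMm c (hsubJ c ⟨le_rfl, hcd⟩); gcongr
    have h5 : D * u d / ε ≤ D * M / ε := by
      have := hMm d (hsubJ d ⟨hcd, le_rfl⟩); gcongr
    have h6 : m / D * (d - c) ≤ 2 * (D * M / ε) := by linarith
    have h7 : m * (d - c) = D * (m / D * (d - c)) := by field_simp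
    rw [h7]
    calc _ ≤ D * (2 * (D * M / ε)) := mul_le_mul_of_nonneg_left h6 hD0.le
      _ = _ := by ring

lemma RS.vbound {T : ℝ} (hT : 0 < T) {h : ℝ → ℝ} {f : ℝ → ℝ → ℝ} {u v : ℝ → ℝ} (R : RS T h f u v)
    (hc : Continuous h) {C : ℝ} (hC : ∀ s, |h s| ≤ C) {B : ℝ} (hB : ∀ t ∈ Icc 0 T, |f t (u t)| ≤ B) :
    ∀ t ∈ Icc 0 T, |v t| ≤ Real.exp (C * T) ^ 2 * B * T := by
  obtain ⟨E, hE0, hEb, hq⟩ := R.factor hT hc hC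
  set D := Real.exp (C * T) with hD
  have hD0 : 0 < D := Real.exp_pos _
  have hB0 : 0 ≤ B := (abs_nonneg _).trans (hB 0 ⟨le_rfl, hT.le⟩)
  obtain ⟨t0, ht0, hv0⟩ := exists_hasDerivAt_eq_zero (f := u) (f' := v) hT R.uc.continuousOn R.pu
    (fun x hx => R.du x (Ioo_subset_Icc_self hx))
  intro t ht
  have h1 := (convex_Icc 0 T).norm_image_sub_le_of_norm_hasDerivWithin_le (C := D * B)
    (fun x hx => (hq x hx).hasDerivWithinAt) (fun x hx => by
      rw [norm_neg, norm_mul, Real.norm_of_nonneg (hE0 x).le]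
      exact mul_le_mul (hEb x hx).2 (hB x hx) (abs_nonneg _) hD0.le) (Ioo_subset_Icc_self ht0) ht
  rw [hv0, mul_zero, sub_zero, norm_mul, Real.norm_of_nonneg (hE0 t).le, Real.norm_eq_abs,
    Real.norm_eq_abs] at h1
  have h2 : |t - t0| ≤ T := by
    rw [abs_le]; constructor <;> linarith [ht.1, ht.2, ht0.1, ht0.2]
  have h3 : D⁻¹ * |v t| ≤ D * B * T :=
    calc _ ≤ E t * |v t| := mul_le_mul_of_nonneg_right (hEb t ht).1 (abs_nonneg _)
      _ ≤ D * B * |t - t0| := h1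
      _ ≤ _ := mul_le_mul_of_nonneg_left h2 (by positivity)
  rw [inv_mul_le_iff₀ hD0] at h3
  linarith

lemma RS.int_zero {T : ℝ} (hT : 0 < T) {h : ℝ → ℝ} {f : ℝ → ℝ → ℝ} {u v : ℝ → ℝ} (R : RS T h f u v)
    (hc : Continuous h) (hfc : Continuous fun t => f t (u t)) :
    ∫ t in (0:ℝ)..T, f t (u t) = 0 := by
  have hd : ∀ t ∈ uIcc 0 T, HasDerivAt (fun t => -(v t + ∫ x in (0:ℝ)..(u t), h x)) (f t (u t)) t := by
    intro t ht
    rw [uIcc_of_le hT.le] at ht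
    have h1 : HasDerivAt (fun y => ∫ x in (0:ℝ)..y, h x) (h (u t)) (u t) :=
      (hc.integral_hasStrictDerivAt 0 (u t)).hasDerivAt
    refine ((R.dv t ht).add (h1.comp t (R.du t ht))).neg.congr_deriv ?_
    ring
  rw [intervalIntegral.integral_eq_sub_of_hasDerivAt hd (hfc.intervalIntegrable _ _)]
  simp [R.pu, R.pv]


lemma gron {T K : ℝ} {f : ℝ → ℂ → ℂ} {Z : ℝ → ℂ} (hZ : PSol T f Z)
    (hf : ∀ t z, ‖f t z‖ ≤ K * ‖z‖) {t0 t : ℝ} (h0 : 0 ≤ t0) (h1 : t0 ≤ t) (h2 : t ≤ T) :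
    ‖Z t‖ ≤ ‖Z t0‖ * Real.exp (K * (t - t0)) := by
  have := norm_le_gronwallBound_of_norm_deriv_right_le (f := Z) (f' := fun t => f t (Z t)) (δ := ‖Z t0‖)
    (K := K) (ε := 0) (a := t0) (b := T) hZ.1.continuousOn
    (fun x hx => (hZ.2.1 x ⟨h0.trans hx.1, hx.2.le⟩).hasDerivWithinAt) le_rfl
    (fun x _ => by simpa using hf x (Z x)) t ⟨h1, h2⟩
  rwa [gronwallBound_ε0] at this

lemma small_sol {T : ℝ} (hT : 0 < T) {C B c : ℝ} (hB0 : 0 ≤ B) (hc0 : 0 < c) {G : ℝ → ℝ}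
    (G0 : G 0 = 0) (Gpos : ∀ s, 0 < s → 0 < G s)
    (hG1 : ∀ ε > 0, ∃ δ > 0, ∀ s, 0 < s → s ≤ δ → G s ≤ ε * s)
    (hG2 : ∀ ε > 0, ∃ δ > 0, ∃ η > 0, ∀ s ω, 0 < s → s ≤ δ → |ω - 1| < η → |G (ω * s) / G s - 1| < ε) :
    ∃ δ > 0, ∀ (h b u v : ℝ → ℝ) (f : ℝ → ℝ → ℝ), Continuous h → (∀ s, |h s| ≤ C) → Continuous b →
      (∀ t ∈ Icc 0 T, |b t| ≤ B) → (∫ t in (0:ℝ)..T, b t) ≤ -c → (Continuous fun t => f t (u t)) →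
      (∀ t s, 0 ≤ s → f t s = b t * G s) → RS T h f u v →
      (∀ t ∈ Icc 0 T, 0 ≤ u t) → (∃ t ∈ Icc 0 T, 0 < u t) → (∀ t ∈ Icc 0 T, u t ≤ δ) → False := by
  set D := Real.exp (C * T) with hD
  have hD0 : 0 < D := Real.exp_pos _
  set ε2 := c / (B * T + 1) with hε2
  have hε20 : 0 < ε2 := by positivity
  obtain ⟨δ2, hδ2, η, hη, h2⟩ := hG2 ε2 hε20
  set ε1 := η / (D ^ 2 * B * T ^ 2 + 1) with hε1
  have hε10 : 0 < ε1 := by positivity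
  obtain ⟨δ1, hδ1, h1⟩ := hG1 ε1 hε10
  refine ⟨min δ1 δ2, lt_min hδ1 hδ2, ?_⟩
  intro h b u v f hc hC hb hbB hbi hfc hf R hu hex hud
  obtain ⟨x, hx, hm⟩ := isCompact_Icc.exists_isMaxOn (nonempty_Icc.2 hT.le) R.uc.continuousOn
  have hm' : ∀ t ∈ Icc 0 T, u t ≤ u x := fun t ht => hm ht
  set M := u x with hM
  have hM0 : 0 < M := by
    obtain ⟨t, ht, h⟩ := hex
    exact h.trans_le (hm' t ht)
  have hMδ := hud x hx
  have hGu : ∀ t ∈ Icc 0 T, 0 ≤ G (u t) ∧ G (u t) ≤ ε1 * M := by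
    intro t ht
    rcases eq_or_lt_of_le (hu t ht) with h0 | h0
    · rw [← h0, G0]; exact ⟨le_rfl, by positivity⟩
    · refine ⟨(Gpos _ h0).le, (h1 _ h0 ((hud t ht).trans (min_le_left _ _))).trans ?_⟩
      exact mul_le_mul_of_nonneg_left (hm' t ht) hε10.le
  have hfb : ∀ t ∈ Icc 0 T, |f t (u t)| ≤ B * (ε1 * M) := by
    intro t ht
    rw [hf t _ (hu t ht), abs_mul, abs_of_nonneg (hGu t ht).1]
    exact mul_le_mul (hbB t ht) (hGu t ht).2 (hGu t ht).1 hB0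
  have hv := R.vbound hT hc hC hfb
  have hclose : ∀ t ∈ Icc 0 T, |u t - M| < η * M := by
    intro t ht
    have h3 := (convex_Icc 0 T).norm_image_sub_le_of_norm_hasDerivWithin_le
      (fun x hx => (R.du x hx).hasDerivWithinAt) (fun x hx => hv x hx) hx ht
    rw [Real.norm_eq_abs, Real.norm_eq_abs] at h3
    have h4 : |t - x| ≤ T := by
      rw [abs_le]; constructor <;> linarith [ht.1, ht.2, hx.1, hx.2]
    refine h3.trans_lt ?_
    calc _ ≤ (D ^ 2 * (B * (ε1 * M)) * T) * T := mul_le_mul_of_nonneg_left h4 (by positivity)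
      _ = (D ^ 2 * B * T ^ 2) * ε1 * M := by ring
      _ < (D ^ 2 * B * T ^ 2 + 1) * ε1 * M := by nlinarith [mul_pos hε10 hM0]
      _ = η * M := by rw [hε1]; field_simp
  have hGM : 0 < G M := Gpos M hM0
  have hGc : ∀ t ∈ Icc 0 T, |G (u t) - G M| ≤ ε2 * G M := by
    intro t ht
    have h3 : |u t / M - 1| < η := by
      rw [div_sub_one hM0.ne', abs_div, abs_of_pos hM0, div_lt_iff₀ hM0]
      exact hclose t ht
    have h4 := h2 M (u t / M) hM0 (hMδ.trans (min_le_right _ _)) h3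
    rw [div_mul_cancel₀ _ hM0.ne', div_sub_one hGM.ne', abs_div, abs_of_pos hGM, div_lt_iff₀ hGM] at h4
    exact h4.le
  have hz := R.int_zero hT hc hfc
  have hle : ∫ t in (0:ℝ)..T, f t (u t) ≤ ∫ t in (0:ℝ)..T, (b t * G M + B * (ε2 * G M)) := by
    refine intervalIntegral.integral_mono_on hT.le (hfc.intervalIntegrable _ _)
      ((by fun_prop : Continuous fun t => b t * G M + B * (ε2 * G M)).intervalIntegrable _ _) ?_
    intro t ht
    rw [hf t _ (hu t ht)]
    have h5 : b t * (G (u t) - G M) ≤ B * (ε2 * G M) := by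
      refine (le_abs_self _).trans ?_
      rw [abs_mul]
      exact mul_le_mul (hbB t ht) (hGc t ht) (abs_nonneg _) hB0
    linarith
  rw [hz, intervalIntegral.integral_add ((by fun_prop : Continuous fun t => b t * G M).intervalIntegrable _ _)
    intervalIntegrable_const, intervalIntegral.integral_mul_const, intervalIntegral.integral_const,
    smul_eq_mul, sub_zero] at hle
  have h6 : (∫ t in (0:ℝ)..T, b t) * G M ≤ -c * G M := mul_le_mul_of_nonneg_right hbi hGM.le
  have h7 : B * T * ε2 < c := by
    have : (B * T + 1) * ε2 = c := by rw [hε2]; field_simp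
    linarith
  nlinarith [mul_lt_mul_of_pos_right h7 hGM]

noncomputable def FF (a G : ℝ → ℝ) (l m n t s : ℝ) : ℝ :=
  ((1 - m) * a t - m) * ((1 - n) * G s + n * max s 0) + l * max (a t) 0 + max (-s) 0

noncomputable def fld (h a G : ℝ → ℝ) (l m n t : ℝ) (z : ℂ) : ℂ :=
  z.im + (-((1 - m) * h z.re) * z.im - FF a G l m n t z.re : ℝ) * Complex.I

lemma fld_cont {h a G : ℝ → ℝ} (hc : Continuous h) (ac : Continuous a) (Gc : Continuous G)
    {l m n : ℝ → ℝ} (hl : Continuous l) (hm : Continuous m) (hn : Continuous n) :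
    Continuous fun p : ℝ × ℝ × ℂ => fld h a G (l p.1) (m p.1) (n p.1) p.2.1 p.2.2 := by
  unfold fld FF
  fun_prop

lemma fld_bound {h a G : ℝ → ℝ} {A B C L : ℝ} (hC : ∀ s, |h s| ≤ C) (hB : ∀ t, |a t| ≤ B) (hA : 0 ≤ A)
    (G0 : ∀ s ≤ 0, G s = 0) (Gpos : ∀ s, 0 < s → 0 < G s) (Glin : ∀ s, 0 ≤ s → G s ≤ A * s)
    {l m n : ℝ} (hl : 0 ≤ l ∧ l ≤ L) (hm : 0 ≤ m ∧ m ≤ 1) (hn : 0 ≤ n ∧ n ≤ 1) (t : ℝ) (z : ℂ) :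
    ‖fld h a G l m n t z‖ ≤ (2 + C + (B + 1) * (A + 1)) * ‖z‖ + L * B := by
  have hB0 : 0 ≤ B := (abs_nonneg _).trans (hB 0)
  have hC0 : 0 ≤ C := (abs_nonneg _).trans (hC 0)
  have hre := Complex.abs_re_le_norm z
  have him := Complex.abs_im_le_norm z
  set s := z.re
  have h1 : |(1 - m) * a t - m| ≤ B + 1 := by
    have := abs_le.1 (hB t)
    rw [abs_le]; constructor <;> nlinarith
  have h2 : |(1 - n) * G s + n * max s 0| ≤ (A + 1) * ‖z‖ := by
    rcases le_or_gt s 0 with h | h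
    · rw [G0 s h, max_eq_right h]; simp; positivity
    · have hp := Gpos s h
      have hli := Glin s h.le
      rw [max_eq_left h.le, abs_of_nonneg (by nlinarith [hn.1, hn.2])]
      rw [abs_of_pos h] at hre
      have : (1 - n) * G s + n * s ≤ (A + 1) * s := by nlinarith [hn.1, hn.2, mul_nonneg hA h.le]
      exact this.trans (mul_le_mul_of_nonneg_left hre (by linarith))
  have h3 : |l * max (a t) 0| ≤ L * B := by
    have : max (a t) 0 ≤ B := max_le ((le_abs_self _).trans (hB t)) hB0
    have h0 : 0 ≤ max (a t) 0 := le_max_right _ _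
    rw [abs_of_nonneg (mul_nonneg hl.1 h0)]
    exact mul_le_mul hl.2 this h0 (hl.1.trans hl.2)
  have h4 : |max (-s) 0| ≤ ‖z‖ := by
    rw [abs_of_nonneg (le_max_right _ _)]
    exact max_le ((neg_le_abs s).trans hre) (norm_nonneg _)
  have h5 : |(1 - m) * h s * z.im| ≤ C * ‖z‖ := by
    rw [abs_mul, abs_mul, abs_of_nonneg (by linarith : 0 ≤ 1 - m)]
    refine mul_le_mul ?_ him (abs_nonneg _) hC0
    have := hC s
    nlinarith [abs_nonneg (h s)]
  have h6 : |((1 - m) * a t - m) * ((1 - n) * G s + n * max s 0)| ≤ (B + 1) * ((A + 1) * ‖z‖) := by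
    rw [abs_mul]; exact mul_le_mul h1 h2 (abs_nonneg _) (by linarith)
  have h7 : |-((1 - m) * h s) * z.im - FF a G l m n t s| ≤ C * ‖z‖ + ((B + 1) * ((A + 1) * ‖z‖) + L * B + ‖z‖) := by
    unfold FF
    rw [abs_le] at *
    constructor <;> linarith
  unfold fld
  refine (norm_add_le _ _).trans ?_
  rw [norm_mul, Complex.norm_I, mul_one, Complex.norm_real, Complex.norm_real, Real.norm_eq_abs,
    Real.norm_eq_abs]
  linarith

lemma PSol.rs {T : ℝ} {h a G : ℝ → ℝ} {l m n : ℝ} {Z : ℝ → ℂ} (hZ : PSol T (fld h a G l m n) Z) :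
    RS T (fun s => (1 - m) * h s) (FF a G l m n) (fun t => (Z t).re) (fun t => (Z t).im) where
  uc := Complex.continuous_re.comp hZ.1
  vc := Complex.continuous_im.comp hZ.1
  du := fun t ht => by
    have := (hZ.2.1 t ht)
    have h2 := (Complex.reCLM.hasFDerivAt.comp_hasDerivAt t this)
    refine h2.congr_deriv ?_
    simp [fld]
  dv := fun t ht => by
    have := (hZ.2.1 t ht)
    have h2 := (Complex.imCLM.hasFDerivAt.comp_hasDerivAt t this)
    refine h2.congr_deriv ?_
    simp [fld]
  pu := by rw [hZ.2.2]
  pv := by rw [hZ.2.2]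


lemma FF_neg {a G : ℝ → ℝ} (G0 : ∀ s ≤ 0, G s = 0) {l : ℝ} (hl : 0 ≤ l) (m n t s : ℝ) (hs : s < 0) :
    0 < FF a G l m n t s := by
  unfold FF
  rw [G0 s hs.le, max_eq_right hs.le, max_eq_left (by linarith : 0 ≤ -s)]
  have := mul_nonneg hl (le_max_right (a t) 0)
  simp
  linarith

lemma FF_pos {a G : ℝ → ℝ} (l m n t s : ℝ) (hs : 0 ≤ s) :
    FF a G l m n t s = ((1 - m) * a t - m) * ((1 - n) * G s + n * s) + l * max (a t) 0 := by
  unfold FF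
  rw [max_eq_left hs, max_eq_right (by linarith : -s ≤ 0)]
  ring

lemma fld_end (h a G : ℝ → ℝ) (t : ℝ) (z : ℂ) : fld h a G 0 1 1 t z = Complex.I * (starRingEnd ℂ) z := by
  have : FF a G 0 1 1 t z.re = - z.re := by
    unfold FF
    rcases le_total z.re 0 with hs | hs
    · rw [max_eq_right hs, max_eq_left (by linarith : 0 ≤ -z.re)]; ring
    · rw [max_eq_left hs, max_eq_right (by linarith : -z.re ≤ 0)]; ring
  unfold fld
  rw [this]
  apply Complex.ext <;> simp

theorem core {T : ℝ} (hT : 0 < T) {h a G : ℝ → ℝ} {A B C ε K s0 : ℝ}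
    (hc : Continuous h) (hC : ∀ s, |h s| ≤ C)
    (Gc : Continuous G) (G0 : ∀ s ≤ 0, G s = 0) (Gpos : ∀ s, 0 < s → 0 < G s)
    (hA : 0 ≤ A) (Glin : ∀ s, 0 ≤ s → G s ≤ A * s)
    (hG1 : ∀ ε > 0, ∃ δ > 0, ∀ s, 0 < s → s ≤ δ → G s ≤ ε * s)
    (hG2 : ∀ ε > 0, ∃ δ > 0, ∃ η > 0, ∀ s ω, 0 < s → s ≤ δ → |ω - 1| < η → |G (ω * s) / G s - 1| < ε)
    (ac : Continuous a) (hB : ∀ t, |a t| ≤ B) (hai : (∫ t in (0:ℝ)..T, a t) < 0)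
    (S : Set ℝ) (hS : IsClosed S) (hSn : (S ∩ Icc 0 T).Nonempty)
    (haS : ∀ t ∈ Icc 0 T, t ∉ S → a t ≤ 0) (hε : 0 < ε)
    (hSI : ∀ s ∈ S ∩ Icc 0 T, ∃ σ τ c, 0 ≤ σ ∧ τ ≤ T ∧ s ∈ Icc σ τ ∧ σ + ε ≤ c ∧ c + ε ≤ τ - ε ∧
      (∀ t ∈ Icc σ τ, 0 ≤ a t) ∧ ∀ t ∈ Icc c (c + ε), ε ≤ a t)
    (hs0 : 0 < s0) (hGK : ∀ s, s0 ≤ s → K * s ≤ G s) (hK0 : 0 ≤ K)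
    (hK : 2 * Real.exp (C * T) ^ 2 / ε * (1 + Real.exp (C * T) ^ 2 * T / ε) < ε * ε * K) :
    ∃ u v, RS T h (fun t s => a t * G s) u v ∧
      ∀ t ∈ Icc 0 T, 0 < u t ∧ u t ≤ (1 + Real.exp (C * T) ^ 2 * T / ε) * s0 := by
  by_contra hcon
  have hB0 : 0 ≤ B := (abs_nonneg _).trans (hB 0)
  have hC0 : 0 ≤ C := (abs_nonneg _).trans (hC 0)
  set D := Real.exp (C * T) with hD
  have hD0 : 0 < D := Real.exp_pos _
  set Θ := 1 + D ^ 2 * T / ε with hΘ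
  have hΘ0 : 0 < Θ := by positivity
  have hGnn : ∀ s, 0 ≤ G s := fun s => by
    rcases le_or_gt s 0 with h | h
    · rw [G0 s h]
    · exact (Gpos s h).le
  have hh : ∀ m, 0 ≤ m → m ≤ 1 → (Continuous fun s => (1 - m) * h s) ∧ ∀ s, |(1 - m) * h s| ≤ C := by
    intro m h0 h1
    refine ⟨by fun_prop, fun s => ?_⟩
    rw [abs_mul, abs_of_nonneg (by linarith : 0 ≤ 1 - m)]
    nlinarith [hC s, abs_nonneg (h s)]
  have hnn : ∀ l m n Z, 0 ≤ l → 0 ≤ m → m ≤ 1 → PSol T (fld h a G l m n) Z →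
      ∀ t ∈ Icc 0 T, 0 ≤ (Z t).re := by
    intro l m n Z hl hm0 hm1 hZ
    exact hZ.rs.nonneg hT (hh m hm0 hm1).1 (hh m hm0 hm1).2 (fun t s hs => FF_neg G0 hl m n t s hs)
  -- upper bounds
  have hup : ∀ l Z, 0 ≤ l → PSol T (fld h a G l 0 0) Z →
      (∀ t ∈ Icc 0 T, (Z t).re ≤ Θ * s0) ∧ ε * l * ε ≤ 2 * D ^ 2 * (Θ * s0) / ε := by
    intro l Z hl hZ
    have R := hZ.rs
    have hu := hnn l 0 0 Z hl le_rfl zero_le_one hZ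
    have hh0 := hh 0 le_rfl zero_le_one
    have hFF : ∀ t ∈ Icc 0 T, FF a G l 0 0 t (Z t).re = a t * G (Z t).re + l * max (a t) 0 := by
      intro t ht
      rw [FF_pos _ _ _ _ _ (hu t ht)]; ring
    obtain ⟨x, hx, hmax⟩ := R.max_in hT hh0.1 hh0.2 S hS hSn (fun t ht htS => by
      rw [hFF t ht, max_eq_right (haS t ht htS)]
      have := mul_nonneg (neg_nonneg.2 (haS t ht htS)) (hGnn (Z t).re)
      linarith)
    obtain ⟨σ, τ, c, hσ, hτ, hxI, hc1, hc2, ha0, haε⟩ := hSI x hx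
    have hsub : ∀ t ∈ Icc σ τ, t ∈ Icc 0 T := fun t ht => ⟨hσ.trans ht.1, ht.2.trans hτ⟩
    have hsubJ : ∀ t ∈ Icc c (c + ε), t ∈ Icc σ τ := fun t ht =>
      ⟨by linarith [ht.1], by linarith [ht.2]⟩
    have hFI : ∀ t ∈ Icc σ τ, FF a G l 0 0 t (Z t).re = a t * (G (Z t).re + l) := by
      intro t ht
      rw [hFF t (hsub t ht), max_eq_left (ha0 t ht)]; ring
    have hpos : ∀ t ∈ Icc σ τ, 0 ≤ FF a G l 0 0 t (Z t).re := by
      intro t ht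
      rw [hFI t ht]
      exact mul_nonneg (ha0 t ht) (add_nonneg (hGnn _) hl)
    have hslope := fun m => R.slope hT hh0.1 hh0.2 hu (m := m) (c := c) (d := c + ε) (M := (Z x).re)
      hσ hτ hε hc1 (by linarith) hc2 hpos hxI rfl (fun t ht => hmax t (hsub t ht))
    have hM : (Z x).re ≤ Θ * s0 := by
      by_contra! hgt
      set M := (Z x).re with hMdef
      have hM0 : 0 < M := (by positivity : 0 < Θ * s0).trans hgt
      have h1 : ∀ t ∈ Icc c (c + ε), M / Θ ≤ (Z t).re := fun t ht => by
        rw [div_le_iff₀ hΘ0]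
        have := (hslope 0).1 t ht
        linarith
      have h2 : s0 < M / Θ := by rw [lt_div_iff₀ hΘ0]; linarith
      have h3 := (hslope (ε * (K * (M / Θ)))).2 (by positivity) (fun t ht => by
        rw [hFI t (hsubJ t ht)]
        refine mul_le_mul (haε t ht) ?_ (by positivity) (ha0 t (hsubJ t ht))
        have h4 := hGK _ (h2.le.trans (h1 t ht))
        have h5 : K * (M / Θ) ≤ K * (Z t).re := mul_le_mul_of_nonneg_left (h1 t ht) hK0
        linarith)
      have h4 : ε * ε * K * (M / Θ) ≤ 2 * D ^ 2 / ε * Θ * (M / Θ) := by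
        calc _ = ε * (K * (M / Θ)) * (c + ε - c) := by ring
          _ ≤ 2 * D ^ 2 * M / ε := h3
          _ = _ := by field_simp
      have h5 : 0 < M / Θ := by positivity
      have := le_of_mul_le_mul_right h4 h5
      linarith
    refine ⟨fun t ht => (hmax t ht).trans hM, ?_⟩
    have h3 := (hslope (ε * l)).2 (by positivity) (fun t ht => by
        rw [hFI t (hsubJ t ht)]
        refine mul_le_mul (haε t ht) ?_ hl (ha0 t (hsubJ t ht))
        linarith [hGnn (Z t).re])
    calc _ = ε * l * (c + ε - c) := by ring
      _ ≤ _ := h3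
      _ ≤ _ := by gcongr
  set Λ := 2 * D ^ 2 * (Θ * s0) / ε / (ε * ε) + 1 with hΛ
  have hΛ0 : 0 ≤ Λ := by positivity
  have hnoΛ : ∀ Z, ¬ PSol T (fld h a G Λ 0 0) Z := by
    intro Z hZ
    have h1 := (hup Λ Z hΛ0 hZ).2
    have h2 : ε * Λ * ε = 2 * D ^ 2 * (Θ * s0) / ε + ε * ε := by
      rw [hΛ]; field_simp
    have := mul_pos hε hε
    linarith
  -- initial data bound
  set ρ := Θ * s0 + D ^ 2 * (B * (A * (Θ * s0)) + Λ * B) * T + 1 with hρ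
  have hρ0 : 0 < ρ := by positivity
  have hinit : ∀ l Z, 0 ≤ l → l ≤ Λ → PSol T (fld h a G l 0 0) Z → ‖Z 0‖ < ρ := by
    intro l Z hl hlΛ hZ
    have hu := hnn l 0 0 Z hl le_rfl zero_le_one hZ
    have hub := (hup l Z hl hZ).1
    have hh0 := hh 0 le_rfl zero_le_one
    have h0 : (0:ℝ) ∈ Icc 0 T := ⟨le_rfl, hT.le⟩
    have hv := hZ.rs.vbound hT hh0.1 hh0.2 (B := B * (A * (Θ * s0)) + Λ * B) (fun t ht => by
      rw [FF_pos _ _ _ _ _ (hu t ht)]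
      have e : ((1 - 0) * a t - 0) * ((1 - 0) * G (Z t).re + 0 * (Z t).re) + l * max (a t) 0
        = a t * G (Z t).re + l * max (a t) 0 := by ring
      rw [e]
      refine (abs_add_le _ _).trans (add_le_add ?_ ?_)
      · rw [abs_mul, abs_of_nonneg (hGnn _)]
        refine mul_le_mul (hB t) ?_ (hGnn _) hB0
        exact (Glin _ (hu t ht)).trans (mul_le_mul_of_nonneg_left (hub t ht) hA)
      · have : max (a t) 0 ≤ B := max_le ((le_abs_self _).trans (hB t)) hB0
        have h0 : 0 ≤ max (a t) 0 := le_max_right _ _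
        rw [abs_of_nonneg (mul_nonneg hl h0)]
        exact mul_le_mul hlΛ this h0 hΛ0) 0 h0
    have h1 := Complex.norm_le_abs_re_add_abs_im (Z 0)
    rw [abs_of_nonneg (hu 0 h0)] at h1
    have h2 := hub 0 h0
    linarith
  -- linear growth when l = 0
  set K0 := 2 + C + (B + 1) * (A + 1) with hK0def
  have hlin : ∀ m n, 0 ≤ m → m ≤ 1 → 0 ≤ n → n ≤ 1 → ∀ t z, ‖fld h a G 0 m n t z‖ ≤ K0 * ‖z‖ := by
    intro m n h1 h2 h3 h4 t z
    have := fld_bound (L := 0) hC hB hA G0 Gpos Glin (l := 0) ⟨le_rfl, le_rfl⟩ ⟨h1, h2⟩ ⟨h3, h4⟩ t z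
    simpa using this
  have hzero : ∀ m n Z, 0 ≤ m → m ≤ 1 → 0 ≤ n → n ≤ 1 → PSol T (fld h a G 0 m n) Z →
      ∀ t ∈ Icc 0 T, Z t = 0 → Z 0 = 0 := by
    intro m n Z h1 h2 h3 h4 hZ t ht hz
    have := gron hZ (hlin m n h1 h2 h3 h4) ht.1 ht.2 le_rfl
    rw [hz, norm_zero, zero_mul] at this
    rw [hZ.2.2]
    exact norm_le_zero_iff.1 this
  have hposi : ∀ m n Z, 0 ≤ m → m ≤ 1 → 0 ≤ n → n ≤ 1 → PSol T (fld h a G 0 m n) Z → Z 0 ≠ 0 →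
      ∀ t ∈ Icc 0 T, 0 < (Z t).re := by
    intro m n Z h1 h2 h3 h4 hZ hZ0 t ht
    have hu := hnn 0 m n Z le_rfl h1 h2 hZ
    refine lt_of_le_of_ne (hu t ht) fun h0 => hZ0 ?_
    refine hzero m n Z h1 h2 h3 h4 hZ t ht ?_
    have hv := (crit_min hT hZ.rs.du hZ.rs.pu hZ.rs.pv ht (fun x hx => by
      simp only [← h0]; exact hu x hx)).1
    exact Complex.ext h0.symm hv
  have hno0 : ∀ Z, PSol T (fld h a G 0 0 0) Z → Z 0 = 0 := by
    intro Z hZ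
    by_contra hZ0
    have hp := hposi 0 0 Z le_rfl zero_le_one le_rfl zero_le_one hZ hZ0
    have hub := (hup 0 Z le_rfl hZ).1
    have R := hZ.rs
    refine hcon ⟨_, _, ⟨R.uc, R.vc, R.du, fun t ht => ?_, R.pu, R.pv⟩, fun t ht => ⟨hp t ht, hub t ht⟩⟩
    refine (R.dv t ht).congr_deriv ?_
    rw [FF_pos _ _ _ _ _ (hp t ht).le]
    ring
  -- small solutions
  have hci : 0 < min (-(∫ t in (0:ℝ)..T, a t)) T := lt_min (by linarith) hT
  obtain ⟨δ, hδ, hsmall⟩ := small_sol hT (C := C) (B := B + 1) (by linarith) hci (G0 0 le_rfl) Gpos hG1 hG2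
  set r := δ / (Real.exp (K0 * T) ) with hr
  have hr0 : 0 < r := by positivity
  have hno4 : ∀ m Z, 0 ≤ m → m ≤ 1 → PSol T (fld h a G 0 m 0) Z → ‖Z 0‖ ≠ r := by
    intro m Z h1 h2 hZ hZr
    have hZ0 : Z 0 ≠ 0 := norm_pos_iff.1 (hZr ▸ hr0)
    have hp := hposi m 0 Z h1 h2 le_rfl zero_le_one hZ hZ0
    have h0 : (0:ℝ) ∈ Icc 0 T := ⟨le_rfl, hT.le⟩
    refine hsmall (fun s => (1 - m) * h s) (fun t => (1 - m) * a t - m) _ _ _ (hh m h1 h2).1 (hh m h1 h2).2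
      (by fun_prop) ?_ ?_ ?_ ?_ hZ.rs (fun t ht => (hp t ht).le) ⟨0, h0, hp 0 h0⟩ ?_
    · intro t _
      have := abs_le.1 (hB t)
      rw [abs_le]; constructor <;> nlinarith
    · rw [intervalIntegral.integral_sub ((by fun_prop : Continuous fun t => (1 - m) * a t).intervalIntegrable _ _)
        intervalIntegrable_const, intervalIntegral.integral_const_mul, intervalIntegral.integral_const,
        smul_eq_mul, sub_zero]
      have e1 := min_le_left (-(∫ t in (0:ℝ)..T, a t)) T
      have e2 := min_le_right (-(∫ t in (0:ℝ)..T, a t)) T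
      have e3 := mul_le_mul_of_nonneg_left e1 (by linarith : 0 ≤ 1 - m)
      have e4 := mul_le_mul_of_nonneg_left e2 h1
      linarith
    · have := hZ.1
      unfold FF
      fun_prop
    · intro t s hs
      rw [FF_pos _ _ _ _ _ hs]; ring
    · intro t ht
      have e1 := gron hZ (hlin m 0 h1 h2 le_rfl zero_le_one) le_rfl ht.1 ht.2
      have hK00 : 0 ≤ K0 := by positivity
      have e2 : Real.exp (K0 * (t - 0)) ≤ Real.exp (K0 * T) := Real.exp_le_exp.2
        (mul_le_mul_of_nonneg_left (by linarith [ht.2]) hK00)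
      have e3 : r * Real.exp (K0 * T) = δ := by rw [hr]; field_simp
      rw [hZr] at e1
      have e4 := mul_le_mul_of_nonneg_left e2 hr0.le
      exact (Complex.re_le_norm _).trans (by linarith)
  have hno5 : ∀ n Z, 0 ≤ n → n ≤ 1 → PSol T (fld h a G 0 1 n) Z → ‖Z 0‖ ≠ r := by
    intro n Z h1 h2 hZ hZr
    have hZ0 : Z 0 ≠ 0 := norm_pos_iff.1 (hZr ▸ hr0)
    have hp := hposi 1 n Z zero_le_one le_rfl h1 h2 hZ hZ0
    have hfc : Continuous fun t => FF a G 0 1 n t (Z t).re := by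
      have := hZ.1
      unfold FF
      fun_prop
    have hz := hZ.rs.int_zero hT (hh 1 zero_le_one le_rfl).1 hfc
    have : 0 < ∫ t in (0:ℝ)..T, -FF a G 0 1 n t (Z t).re := by
      refine intervalIntegral.intervalIntegral_pos_of_pos_on (hfc.neg.intervalIntegrable _ _) ?_ hT
      intro t ht
      have hpt := hp t (Ioo_subset_Icc_self ht)
      rw [FF_pos _ _ _ _ _ hpt.le]
      have hG := Gpos _ hpt
      have : 0 < (1 - n) * G (Z t).re + n * (Z t).re := by
        rcases eq_or_lt_of_le h1 with h | h
        · rw [← h]; simpa using hG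
        · have e1 := mul_pos h hpt
          have e2 := mul_nonneg (by linarith : 0 ≤ 1 - n) hG.le
          linarith
      linarith
    rw [intervalIntegral.integral_neg, hz] at this
    simp at this
  -- the homotopies
  have stage : ∀ l m n q : ℝ → ℝ, Continuous l → Continuous m → Continuous n → Continuous q →
      (∀ s ∈ Icc (0:ℝ) 1, (0 ≤ l s ∧ l s ≤ Λ) ∧ (0 ≤ m s ∧ m s ≤ 1) ∧ (0 ≤ n s ∧ n s ≤ 1) ∧ 0 ≤ q s) →
      (∀ s ∈ Icc (0:ℝ) 1, ∀ Z, PSol T (fld h a G (l s) (m s) (n s)) Z → ‖Z 0‖ ≠ q s) →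
      ∀ᶠ N : ℕ in atTop,
        ((HasLg fun w : Circle => eul (fld h a G (l 0) (m 0) (n 0)) (T / N) (q 0 * cc w) N - q 0 * cc w)
          ∨ q 0 = 0) →
        (HasLg fun w : Circle => eul (fld h a G (l 1) (m 1) (n 1)) (T / N) (q 1 * cc w) N - q 1 * cc w) := by
    intro l m n q hl hm hn hq hr1 hr2
    refine eul_step T hT (fun s => fld h a G (l s) (m s) (n s)) (fld_cont hc ac Gc hl hm hn)
      (K0 + Λ * B) (by positivity) ?_ q hq (fun s hs => (hr1 s hs).2.2.2) hr2
    intro s hs t z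
    refine (fld_bound hC hB hA G0 Gpos Glin (hr1 s hs).1 (hr1 s hs).2.1 (hr1 s hs).2.2.1 t z).trans ?_
    have e1 : 0 ≤ K0 := by positivity
    have e2 : 0 ≤ Λ * B := by positivity
    nlinarith [norm_nonneg z, mul_nonneg e2 (norm_nonneg z)]
  have st1 := stage (fun _ => Λ) (fun _ => 0) (fun _ => 0) (fun s => s * ρ) (by fun_prop) (by fun_prop)
    (by fun_prop) (by fun_prop)
    (fun s hs => ⟨⟨hΛ0, le_rfl⟩, ⟨le_rfl, zero_le_one⟩, ⟨le_rfl, zero_le_one⟩, mul_nonneg hs.1 hρ0.le⟩)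
    (fun s _ Z hZ => absurd hZ (hnoΛ Z))
  have st2 := stage (fun s => (1 - s) * Λ) (fun _ => 0) (fun _ => 0) (fun _ => ρ) (by fun_prop) (by fun_prop)
    (by fun_prop) (by fun_prop)
    (fun s hs => ⟨⟨mul_nonneg (by linarith [hs.2]) hΛ0, mul_le_of_le_one_left hΛ0 (by linarith [hs.1])⟩,
      ⟨le_rfl, zero_le_one⟩, ⟨le_rfl, zero_le_one⟩, hρ0.le⟩)
    (fun s hs Z hZ => (hinit _ Z (mul_nonneg (by linarith [hs.2]) hΛ0)
      (mul_le_of_le_one_left hΛ0 (by linarith [hs.1])) hZ).ne)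
  have hseg : ∀ s ∈ Icc (0:ℝ) 1, 0 < (1 - s) * ρ + s * r := by
    intro s hs
    rcases eq_or_lt_of_le hs.1 with h | h
    · rw [← h]; simpa using hρ0
    · have e1 := mul_pos h hr0
      have e2 := mul_nonneg (by linarith [hs.2] : 0 ≤ 1 - s) hρ0.le
      linarith
  have st3 := stage (fun _ => 0) (fun _ => 0) (fun _ => 0) (fun s => (1 - s) * ρ + s * r) (by fun_prop)
    (by fun_prop) (by fun_prop) (by fun_prop)
    (fun s hs => ⟨⟨le_rfl, hΛ0⟩, ⟨le_rfl, zero_le_one⟩, ⟨le_rfl, zero_le_one⟩, (hseg s hs).le⟩)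
    (fun s hs Z hZ => by rw [hno0 Z hZ, norm_zero]; exact (hseg s hs).ne)
  have st4 := stage (fun _ => 0) (fun s => s) (fun _ => 0) (fun _ => r) (by fun_prop)
    (by fun_prop) (by fun_prop) (by fun_prop)
    (fun s hs => ⟨⟨le_rfl, hΛ0⟩, hs, ⟨le_rfl, zero_le_one⟩, hr0.le⟩)
    (fun s hs Z hZ => hno4 s Z hs.1 hs.2 hZ)
  have st5 := stage (fun _ => 0) (fun _ => 1) (fun s => s) (fun _ => r) (by fun_prop)
    (by fun_prop) (by fun_prop) (by fun_prop)
    (fun s hs => ⟨⟨le_rfl, hΛ0⟩, ⟨zero_le_one, le_rfl⟩, hs, hr0.le⟩)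
    (fun s hs Z hZ => hno5 s Z hs.1 hs.2 hZ)
  obtain ⟨N0, hN0⟩ := exists_nat_gt T
  obtain ⟨N, h1, h2, h3, h4, h5, hN1, hN2⟩ := (st1.and (st2.and (st3.and (st4.and (st5.and
    ((eventually_ge_atTop N0).and (eventually_ge_atTop 1))))))).exists
  have hNT : T < N := hN0.trans_le (by exact_mod_cast hN1)
  have hNp : (0:ℝ) < N := hT.trans hNT
  simp only [zero_mul, one_mul, sub_zero, sub_self, zero_add, add_zero] at h1 h2 h3 h4 h5
  refine saddle_no_log (fld h a G 0 1 1) (fld_end h a G) (T / N) r hr0 (by positivity)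
    (by rw [div_lt_one hNp]; exact hNT) N (by omega) ?_
  exact h5 (Or.inl (h4 (Or.inl (h3 (Or.inl (h2 (Or.inl (h1 (Or.inr trivial)))))))))


theorem ptw {σ τ t : ℝ} (hst : σ < τ) {O E : Set ℝ} {P : ℝ → Prop} (hO : IsOpen O)
    (ht : t ∈ Icc σ τ) (htO : t ∈ O) (hE : ∀ᵐ x ∂(volume.restrict E), P x)
    (hsub : O ∩ Ioo σ τ ⊆ E) : ∃ x ∈ O ∩ Ioo σ τ, P x := by
  have hne : (O ∩ Ioo σ τ).Nonempty := by
    have : t ∈ closure (Ioo σ τ) := by rwa [closure_Ioo hst.ne]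
    exact mem_closure_iff.1 this O hO htO
  have hop : IsOpen (O ∩ Ioo σ τ) := hO.inter isOpen_Ioo
  have h1 : ∀ᵐ x ∂(volume.restrict (O ∩ Ioo σ τ)), P x :=
    ae_restrict_of_ae_restrict_of_subset hsub hE
  rw [ae_restrict_iff' hop.measurableSet] at h1
  by_contra hcon
  push Not at hcon
  have h2 : volume (O ∩ Ioo σ τ) = 0 := by
    refine measure_mono_null ?_ (ae_iff.1 h1)
    intro x hx hx2
    exact hcon x hx (hx2 hx)
  exact (hop.measure_pos volume hne).ne' h2

theorem a1_pt {T : ℝ} (hT : 0 < T) {a : ℝ → ℝ} (ac : Continuous a) (ha1 : CondA1 T a) :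
    ∃ (S : Set ℝ) (ε : ℝ), IsClosed S ∧ (S ∩ Icc 0 T).Nonempty ∧
    (∀ t ∈ Icc 0 T, t ∉ S → a t ≤ 0) ∧ 0 < ε ∧
    (∀ s ∈ S ∩ Icc 0 T, ∃ σ τ c, 0 ≤ σ ∧ τ ≤ T ∧ s ∈ Icc σ τ ∧ σ + ε ≤ c ∧ c + ε ≤ τ - ε ∧
      (∀ t ∈ Icc σ τ, 0 ≤ a t) ∧ ∀ t ∈ Icc c (c + ε), ε ≤ a t) := by
  obtain ⟨m, σ, τ, hm, hst, -, hp, hnz, hn⟩ := ha1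
  have hSc : IsClosed (⋃ i, Icc (σ i) (τ i)) := isClosed_iUnion_of_finite fun i => isClosed_Icc
  have hx : ∀ i, ∃ x ∈ Ioo (σ i) (τ i), a x ≠ 0 := by
    intro i
    by_contra hcon
    push Not at hcon
    apply hnz i
    rw [← restrict_Ioo_eq_restrict_Icc]
    exact (ae_restrict_iff' measurableSet_Ioo).2 (Eventually.of_forall hcon)
  have hpp : ∀ i, ∀ t ∈ Icc (σ i) (τ i), 0 ≤ a t := by
    intro i t ht
    obtain ⟨x, hx, -⟩ := hx i
    by_contra hneg
    push Not at hneg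
    obtain ⟨y, hy, hy2⟩ := ptw (hx.1.trans hx.2) (isOpen_lt ac continuous_const) ht
      (show t ∈ {t | a t < 0} from hneg) (hp i) (fun z hz => Ioo_subset_Icc_self hz.2)
    exact absurd hy.1 (not_lt.2 hy2)
  have hev : ∀ i, ∀ᶠ ε in nhdsWithin (0:ℝ) (Ioi 0), ∃ c, σ i + ε ≤ c ∧ c + ε ≤ τ i - ε ∧
      ∀ t ∈ Icc c (c + ε), ε ≤ a t := by
    intro i
    obtain ⟨x, hx, hax⟩ := hx i
    have hpos : 0 < a x := lt_of_le_of_ne (hpp i x (Ioo_subset_Icc_self hx)) hax.symm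
    have h1 : ∀ᶠ t in nhds x, a x / 2 < a t :=
      ac.continuousAt.eventually (lt_mem_nhds (by linarith))
    obtain ⟨r, hr, h2⟩ := Metric.eventually_nhds_iff.1 h1
    have h3 : 0 < min (min (r / 2) (a x / 2)) (min (x - σ i) ((τ i - x) / 2)) := by
      have := hx.1; have := hx.2
      refine lt_min (lt_min ?_ ?_) (lt_min ?_ ?_) <;> linarith
    filter_upwards [Ioo_mem_nhdsGT h3] with ε hε
    have e := hε.2
    simp only [lt_min_iff] at e
    refine ⟨x, by linarith, by linarith, fun t ht => ?_⟩
    have := @h2 t (by rw [Real.dist_eq, abs_lt]; constructor <;> linarith [ht.1, ht.2, e.1.1])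
    linarith
  obtain ⟨ε, hε, hε0⟩ := ((eventually_all.2 hev).and self_mem_nhdsWithin).exists
  refine ⟨⋃ i, Icc (σ i) (τ i), ε, hSc, ?_, ?_, hε0, ?_⟩
  · refine ⟨σ ⟨0, hm⟩, mem_iUnion.2 ⟨⟨0, hm⟩, left_mem_Icc.2 (hst _).2.1⟩, (hst _).1,
      (hst _).2.1.trans (hst _).2.2⟩
  · intro t ht htS
    by_contra hneg
    push Not at hneg
    obtain ⟨y, hy, hy2⟩ := ptw hT ((isOpen_lt continuous_const ac).inter hSc.isOpen_compl) ht
      (show t ∈ {t | 0 < a t} ∩ (⋃ i, Icc (σ i) (τ i))ᶜ from ⟨hneg, htS⟩) hn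
      (fun z hz => ⟨Ioo_subset_Icc_self hz.2, hz.1.2⟩)
    exact absurd hy.1.1 (not_lt.2 hy2)
  · rintro s ⟨hs, -⟩
    obtain ⟨i, hi⟩ := mem_iUnion.1 hs
    obtain ⟨c, h1, h2, h3⟩ := hε i
    exact ⟨σ i, τ i, c, (hst i).1, (hst i).2.2, hi, h1, h2, hpp i, h3⟩

theorem exG {g : ℝ → ℝ} (hg1 : CondG1 g) (hreg : RegOscAtZero g)
    (hg0 : Tendsto (fun s => g s / s) (nhdsWithin 0 (Ioi 0)) (nhds 0)) {K s0 M : ℝ}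
    (hK : 0 ≤ K) (hs0 : 0 < s0) (hM : s0 ≤ M) (hgK : ∀ s, s0 ≤ s → K * s ≤ g s) :
    ∃ (G : ℝ → ℝ) (A : ℝ), Continuous G ∧ (∀ s ≤ 0, G s = 0) ∧ (∀ s, 0 < s → 0 < G s) ∧
    0 ≤ A ∧ (∀ s, 0 ≤ s → G s ≤ A * s) ∧
    (∀ ε > 0, ∃ δ > 0, ∀ s, 0 < s → s ≤ δ → G s ≤ ε * s) ∧
    (∀ ε > 0, ∃ δ > 0, ∃ η > 0, ∀ s ω, 0 < s → s ≤ δ → |ω - 1| < η →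
      |G (ω * s) / G s - 1| < ε) ∧
    (∀ s, s0 ≤ s → K * s ≤ G s) ∧ (∀ s, 0 ≤ s → s ≤ M → G s = g s) := by
  obtain ⟨gc, gnn, g0, gpos⟩ := hg1
  have hM0 : 0 < M := hs0.trans_le hM
  obtain ⟨G, hG⟩ : ∃ G : ℝ → ℝ, G = fun s => g (min (max s 0) M) + K * max (s - M) 0 := ⟨_, rfl⟩
  have e1 : ∀ s, 0 ≤ s → s ≤ M → G s = g s := by
    intro s h1 h2
    simp [hG, max_eq_left h1, min_eq_left h2, max_eq_right (sub_nonpos.2 h2)]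
  have e2 : ∀ s, M ≤ s → G s = g M + K * (s - M) := by
    intro s h1
    simp [hG, max_eq_left (hM0.le.trans h1), min_eq_right h1, max_eq_left (sub_nonneg.2 h1)]
  have e0 : ∀ s ≤ 0, G s = 0 := by
    intro s h1
    simp [hG, max_eq_right h1, min_eq_left hM0.le, g0, max_eq_right (show s - M ≤ 0 by linarith)]
  have Gc : Continuous G := by
    rw [hG]
    refine Continuous.add (gc.comp_continuous (by fun_prop) fun s => ?_) (by fun_prop)
    exact le_min (le_max_right _ _) hM0.le
  have hG1 : ∀ ε > 0, ∃ δ > 0, ∀ s, 0 < s → s ≤ δ → G s ≤ ε * s := by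
    intro ε hε
    have h1 := hg0.eventually (gt_mem_nhds hε)
    obtain ⟨δ, hδ, h2⟩ := mem_nhdsGT_iff_exists_Ioo_subset.1 h1
    have hδ : 0 < δ := hδ
    refine ⟨min (δ / 2) M, by positivity, fun s hs hs2 => ?_⟩
    rw [e1 s hs.le (hs2.trans (min_le_right _ _))]
    have : g s / s < ε := h2 ⟨hs, by have := hs2.trans (min_le_left _ _); linarith⟩
    exact ((div_lt_iff₀ hs).1 this).le
  obtain ⟨δ, hδ, hδ2⟩ := hG1 1 one_pos
  obtain ⟨Q, hQ⟩ : ∃ Q, ∀ s ∈ Icc 0 M, G s ≤ Q := by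
    obtain ⟨Q, hQ⟩ := (isCompact_Icc (a := (0:ℝ)) (b := M)).bddAbove_image Gc.continuousOn
    exact ⟨Q, fun s hs => hQ (mem_image_of_mem _ hs)⟩
  have hQ0 : 0 ≤ Q := by
    have := hQ 0 ⟨le_rfl, hM0.le⟩
    rwa [e0 0 le_rfl] at this
  have Gpos : ∀ s, 0 < s → 0 < G s := by
    intro s hs
    rcases le_total s M with h1 | h1
    · rw [e1 s hs.le h1]; exact gpos s hs
    · rw [e2 s h1]
      have := gpos M hM0
      have := mul_nonneg hK (sub_nonneg.2 h1)
      linarith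
  have hA0 : 0 ≤ Q / δ := by positivity
  have hA1 : 0 ≤ Q / M := by positivity
  refine ⟨G, 1 + Q / δ + Q / M + K, Gc, e0, Gpos, by positivity, ?_, hG1, ?_, ?_, e1⟩
  · intro s hs
    rcases hs.eq_or_lt with rfl | hs'
    · rw [e0 0 le_rfl]; simp
    have k1 := mul_nonneg hA0 hs
    have k2 := mul_nonneg hA1 hs
    have k3 := mul_nonneg hK hs
    have : (1 + Q / δ + Q / M + K) * s = s + Q / δ * s + Q / M * s + K * s := by ring
    rw [this]
    rcases le_total s δ with h1 | h1
    · have := hδ2 s hs' h1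
      linarith
    rcases le_total s M with h2 | h2
    · have := hQ s ⟨hs, h2⟩
      have : Q ≤ Q / δ * s := by
        rw [div_mul_eq_mul_div, le_div_iff₀ hδ]
        exact mul_le_mul_of_nonneg_left h1 hQ0
      linarith
    · have k4 := hQ M ⟨hM0.le, le_rfl⟩
      rw [e1 M hM0.le le_rfl] at k4
      have : Q ≤ Q / M * s := by
        rw [div_mul_eq_mul_div, le_div_iff₀ hM0]
        exact mul_le_mul_of_nonneg_left h2 hQ0
      rw [e2 s h2]
      have := mul_nonneg hK hM0.le
      linarith
  · intro ε hε
    obtain ⟨δ, hδ, η, hη, h1⟩ := hreg ε hε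
    refine ⟨min (δ / 2) (M / 2), by positivity, min η 1, by positivity, fun s ω hs hs2 hω => ?_⟩
    rw [le_min_iff] at hs2
    rw [lt_min_iff] at hω
    have hw := abs_lt.1 hω.2
    have hpos : 0 ≤ ω * s := mul_nonneg (by linarith) hs.le
    have hle : ω * s ≤ M := by nlinarith
    rw [e1 s hs.le (by linarith), e1 _ hpos hle]
    exact h1 s ω hs (by linarith) hω.1
  · intro s hs
    rcases le_total s M with h1 | h1
    · rw [e1 s (hs0.le.trans hs) h1]; exact hgK s hs
    · rw [e2 s h1]
      have := hgK M hM
      linarith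

/-- Theorem (Liénard type equation): for `h : [0,∞) → ℝ` continuous and bounded,
`g` satisfying (g1), regularly oscillating at zero, with `g(s)/s → 0` as
`s → 0⁺` and `g(s)/s → +∞` as `s → +∞`, and a continuous weight `a` satisfying
(a1) and (a2), the periodic problem for `u'' + h(u) u' + a(x) g(u) = 0` on
`[0,T]` has at least one positive solution. -/
theorem statement_16
    (T : ℝ) (hT : 0 < T)
    (h : ℝ → ℝ) (hhc : ContinuousOn h (Ici (0:ℝ)))
    (hhb : ∃ C : ℝ, 0 < C ∧ ∀ s : ℝ, 0 ≤ s → |h s| ≤ C)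
    (g : ℝ → ℝ) (hg1 : CondG1 g) (hreg : RegOscAtZero g)
    (hg0 : Tendsto (fun s => g s / s) (nhdsWithin 0 (Ioi 0)) (nhds 0))
    (hginf : Tendsto (fun s => g s / s) atTop atTop)
    (a : ℝ → ℝ) (hac : ContinuousOn a (Icc (0:ℝ) T))
    (ha1 : CondA1 T a)
    (ha2 : (∫ x in (0:ℝ)..T, a x) < 0) :
    ∃ u u' u'' : ℝ → ℝ,
      (∀ x ∈ Icc (0:ℝ) T, HasDerivWithinAt u (u' x) (Icc (0:ℝ) T) x) ∧
      (∀ x ∈ Icc (0:ℝ) T, HasDerivWithinAt u' (u'' x) (Icc (0:ℝ) T) x) ∧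
      ContinuousOn u'' (Icc (0:ℝ) T) ∧
      (∀ x ∈ Icc (0:ℝ) T, 0 < u x) ∧
      (∀ x ∈ Icc (0:ℝ) T, u'' x + h (u x) * u' x + a x * g (u x) = 0) ∧
      u 0 = u T ∧ u' 0 = u' T := by
  obtain ⟨C, hC0, hC⟩ := hhb
  obtain ⟨b, hb⟩ : ∃ b : ℝ → ℝ, b = IccExtend hT.le ((Icc 0 T).domRestrict a) := ⟨_, rfl⟩
  have bc : Continuous b := by
    rw [hb]; exact (continuousOn_iff_continuous_domRestrict.1 hac).Icc_extend'
  have hba : ∀ t ∈ Icc 0 T, b t = a t := by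
    intro t ht
    rw [hb, IccExtend_of_mem _ _ ht]; rfl
  obtain ⟨B, hB⟩ : ∃ B, ∀ t, |b t| ≤ B := by
    obtain ⟨B, hB⟩ := (isCompact_Icc (a := (0:ℝ)) (b := T)).bddAbove_image
      (f := fun t => |a t|) hac.abs
    refine ⟨B, fun t => ?_⟩
    rw [hb]
    exact hB (mem_image_of_mem _ (projIcc 0 T hT.le t).2)
  have hbi : (∫ t in (0:ℝ)..T, b t) < 0 := by
    rw [intervalIntegral.integral_congr (g := a)]
    · exact ha2
    · intro t ht
      rw [uIcc_of_le hT.le] at ht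
      exact hba t ht
  have hb1 : CondA1 T b := by
    obtain ⟨m, σ, τ, hm, hst, hd, hp, hnz, hn⟩ := ha1
    have hsub : ∀ i, Icc (σ i) (τ i) ⊆ Icc 0 T := fun i => Icc_subset_Icc (hst i).1 (hst i).2.2
    have key : ∀ E : Set ℝ, MeasurableSet E → E ⊆ Icc 0 T →
        ∀ᵐ x ∂(volume.restrict E), b x = a x := fun E hE hE2 =>
      (ae_restrict_iff' hE).2 (Eventually.of_forall fun x hx => hba x (hE2 hx))
    refine ⟨m, σ, τ, hm, hst, hd, fun i => ?_, fun i hcon => hnz i ?_, ?_⟩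
    · filter_upwards [hp i, key _ measurableSet_Icc (hsub i)] with x h1 h2
      rwa [h2]
    · filter_upwards [hcon, key _ measurableSet_Icc (hsub i)] with x h1 h2
      rwa [← h2]
    · filter_upwards [hn, key _ (measurableSet_Icc.diff
        (MeasurableSet.iUnion fun i => measurableSet_Icc)) sdiff_subset] with x h1 h2
      rwa [h2]
  obtain ⟨S, ε, hS, hSn, haS, hε, hSI⟩ := a1_pt hT bc hb1
  obtain ⟨Θ, hΘ⟩ : ∃ Θ, Θ = 1 + Real.exp (C * T) ^ 2 * T / ε := ⟨_, rfl⟩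
  have hΘ1 : 1 ≤ Θ := by
    have : 0 ≤ Real.exp (C * T) ^ 2 * T / ε := by positivity
    rw [hΘ]; linarith
  obtain ⟨L, hL⟩ : ∃ L, L = 2 * Real.exp (C * T) ^ 2 / ε * Θ := ⟨_, rfl⟩
  have hL0 : 0 ≤ L := by rw [hL]; positivity
  obtain ⟨K, hK⟩ : ∃ K, K = L / (ε * ε) + 1 := ⟨_, rfl⟩
  have hK0 : 0 ≤ K := by rw [hK]; positivity
  have hLK : L < ε * ε * K := by
    have : ε * ε * K = L + ε * ε := by rw [hK]; field_simp
    rw [this]; have := mul_pos hε hε; linarith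
  obtain ⟨s1, hs1⟩ := eventually_atTop.1 (hginf.eventually_ge_atTop K)
  have hs0 : 0 < max s1 1 := lt_max_of_lt_right one_pos
  have hgK : ∀ s, max s1 1 ≤ s → K * s ≤ g s := by
    intro s hs
    exact (le_div_iff₀ (hs0.trans_le hs)).1 (hs1 s ((le_max_left _ _).trans hs))
  obtain ⟨G, A, Gc, G0, Gpos, hA, Glin, hG1, hG2, hGK, hGg⟩ := exG hg1 hreg hg0 hK0 hs0
    (show max s1 1 ≤ Θ * max s1 1 by nlinarith) hgK
  have hhc2 : Continuous fun s => h (max s 0) :=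
    hhc.comp_continuous (by fun_prop) fun s => mem_Ici.2 (le_max_right s 0)
  obtain ⟨u, v, hR, hu⟩ := core hT (h := fun s => h (max s 0)) (C := C) hhc2
    (fun s => hC _ (le_max_right _ _)) Gc G0 Gpos hA Glin hG1 hG2 bc hB hbi S hS hSn haS hε hSI
    hs0 hGK hK0 (by rw [← hΘ, ← hL]; exact hLK)
  rw [← hΘ] at hu
  refine ⟨u, v, fun x => -h (max (u x) 0) * v x - b x * G (u x),
    fun x hx => (hR.du x hx).hasDerivWithinAt, fun x hx => (hR.dv x hx).hasDerivWithinAt, ?_,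
    fun x hx => (hu x hx).1, fun x hx => ?_, hR.pu, hR.pv⟩
  · have := hR.uc
    have := hR.vc
    have h3 : Continuous fun x => h (max (u x) 0) := hhc2.comp hR.uc
    have h4 : Continuous fun x => G (u x) := Gc.comp hR.uc
    exact ((h3.neg.mul hR.vc).sub (bc.mul h4)).continuousOn
  · obtain ⟨h1, h2⟩ := hu x hx
    simp only [max_eq_left h1.le, hba x hx, hGg _ h1.le h2]
    ring
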